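/- arXiv:1106.0082 — 2 statements merged into one kernel-verified Lean document; each statement's English description precedes it below -/
import Mathlib

section
/- Let F be a linearly closed differential field of characteristic zero, and let K : F^ℓ → F^ℓ be an ℓ×ℓ matrix differential operator of order N with invertible leading coefficient, i.e., (Ku)_i = Σ_{j=1}^ℓ Σ_{n=0}^N K_{ij,n} ∂^n u_j with the matrix K_N = (K_{ij,N})_{i,j} ∈ Mat_{ℓ×ℓ}(F) invertible. Then for every ℓ×ℓ matrix differential operator S over F that is skewadjoint, i.e., S*(u) = −S(u) for all u ∈ F^ℓ, there exists an ℓ×ℓ matrix differential operator P over F such that K(P(u)) − P*(K*(u)) = S(u) for all u ∈ F^ℓ. -/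
/-- A derivation on a field: an additive map satisfying the Leibniz rule. -/
structure IsDerivation {F : Type*} [Field F] (d : F → F) : Prop where
  map_add : ∀ a b : F, d (a + b) = d a + d b
  leibniz : ∀ a b : F, d (a * b) = d a * b + a * d b

/-- A differential field `(F, d)` is linearly closed if every linear differential equation
`a_M d^M u + ⋯ + a_1 d u + a_0 u = b` with `a_M ≠ 0` has a solution in `F`,
and has a nonzero solution for `b = 0`, provided that `M ≥ 1`. -/
def LinearlyClosed {F : Type*} [Field F] (d : F → F) : Prop :=
  ∀ (M : ℕ) (a : ℕ → F), a M ≠ 0 →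
    (∀ b : F, ∃ u : F, ∑ n ∈ Finset.range (M + 1), a n * d^[n] u = b) ∧
    (1 ≤ M → ∃ u : F, u ≠ 0 ∧ ∑ n ∈ Finset.range (M + 1), a n * d^[n] u = 0)

/-- The `ℓ×ℓ` matrix differential operator `(Au)_i = Σ_j Σ_{n=0}^M A_{ij,n} d^n (u j)`. -/
noncomputable def matOp {F : Type*} [Field F] (d : F → F) {l : ℕ} (M : ℕ)
    (A : Fin l → Fin l → ℕ → F) (u : Fin l → F) : Fin l → F :=
  fun i => ∑ j, ∑ n ∈ Finset.range (M + 1), A i j n * d^[n] (u j)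

/-- The formal adjoint `(A*u)_i = Σ_j Σ_{n=0}^M (−1)^n d^n (A_{ji,n} u_j)`. -/
noncomputable def matOpAdj {F : Type*} [Field F] (d : F → F) {l : ℕ} (M : ℕ)
    (A : Fin l → Fin l → ℕ → F) (u : Fin l → F) : Fin l → F :=
  fun i => ∑ j, ∑ n ∈ Finset.range (M + 1), (-1 : F) ^ n * d^[n] (A j i n * u j)


namespace S8
open Finset Matrix

section A
variable {F : Type*} [Field F] {d : F → F}

def dh (hd : IsDerivation d) : F →+ F := AddMonoidHom.mk' d hd.map_add

lemma d_zero (hd : IsDerivation d) : d 0 = 0 := (dh hd).map_zero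
lemma d_neg (hd : IsDerivation d) (a : F) : d (-a) = - d a := (dh hd).map_neg a
lemma d_sub (hd : IsDerivation d) (a b : F) : d (a - b) = d a - d b := (dh hd).map_sub a b
lemma d_sum (hd : IsDerivation d) {ι : Type*} (s : Finset ι) (f : ι → F) :
    d (∑ i ∈ s, f i) = ∑ i ∈ s, d (f i) := map_sum (dh hd) f s
lemma d_one (hd : IsDerivation d) : d 1 = 0 := by
  have := hd.leibniz 1 1
  simpa using this

variable {V : Type*} [AddCommGroup V] [Module F V]

/-- defect map -/
def defect (hd : IsDerivation d) (nab : V →+ V)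
    (hn : ∀ (f : F) (v : V), nab (f • v) = d f • v + f • nab v)
    (b φ : V →ₗ[F] F) : V →ₗ[F] F where
  toFun v := d (φ v) - φ (nab v) - b v
  map_add' x y := by simp [hd.map_add]; ring
  map_smul' f x := by simp [hd.leibniz, hn]; ring

lemma ext_step [FiniteDimensional F V] (hd : IsDerivation d) (hlc : LinearlyClosed d)
    (nab : V →+ V)
    (hn : ∀ (f : F) (v : V), nab (f • v) = d f • v + f • nab v)
    (b : V →ₗ[F] F) (W : Submodule F V) (hW : ∀ v ∈ W, nab v ∈ W) (φ : V →ₗ[F] F)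
    (hφ : W ≤ LinearMap.ker (defect hd nab hn b φ)) (v0 : V) (hv0 : v0 ∉ W) :
    ∃ W' : Submodule F V, W < W' ∧ (∀ v ∈ W', nab v ∈ W') ∧ ∃ φ' : V →ₗ[F] F,
      W' ≤ LinearMap.ker (defect hd nab hn b φ') := by
  classical
  set v : ℕ → V := fun n => nab^[n] v0 with hv
  have hvs : ∀ n, nab (v n) = v (n+1) := fun n => by
    simp only [hv, Function.iterate_succ_apply']
  set x : ℕ → V ⧸ W := fun n => W.mkQ (v n) with hx
  have hex : ∃ k : ℕ, ¬ LinearIndependent F (fun j : Fin (k+1) => x j) := by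
    refine ⟨Module.finrank F (V ⧸ W), fun h => ?_⟩
    have := h.fintype_card_le_finrank
    simp at this
  obtain ⟨k, hk, hkm⟩ : ∃ k : ℕ, ¬ LinearIndependent F (fun j : Fin (k+1) => x j) ∧
      LinearIndependent F (fun j : Fin k => x j) := by
    refine ⟨Nat.find hex, Nat.find_spec hex, ?_⟩
    rcases h : Nat.find hex with _ | m
    · exact linearIndependent_empty_type
    · have := Nat.find_min hex (m := m) (by omega)
      simpa using this
  have hmem : x k ∈ Submodule.span F (Set.range (fun j : Fin k => x j)) := by
    by_contra hc
    apply hk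
    have := (linearIndependent_finSnoc (v := fun j : Fin k => x j) (x := x k)).2 ⟨hkm, hc⟩
    have e : (fun j : Fin (k+1) => x j) =
        (Fin.snoc (fun j : Fin k => x j) (x k) : Fin (k+1) → V ⧸ W) := by
      funext j
      refine Fin.lastCases ?_ (fun i => ?_) j
      · simp
      · simp
    rw [e]
    exact this
  obtain ⟨c, hc⟩ := (Submodule.mem_span_range_iff_exists_fun F).1 hmem
  set w : V := v k - ∑ j : Fin k, c j • v j with hw
  have hwW : w ∈ W := by
    rw [← Submodule.Quotient.mk_eq_zero, ← Submodule.mkQ_apply, hw, map_sub, map_sum]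
    simp only [map_smul]
    rw [sub_eq_zero]; exact hc.symm
  -- the scalar equation
  let β : ℕ → F := fun n => Nat.rec 0 (fun j r => d r + b (v j)) n
  have hβ : ∀ j, β (j+1) = d (β j) + b (v j) := fun j => rfl
  have hβ0 : β 0 = 0 := rfl
  let a : ℕ → F := fun n => if h : n < k then - c ⟨n, h⟩ else 1
  obtain ⟨y, hy⟩ := (hlc k a (by simp [a])).1 (φ w + β k - ∑ j : Fin k, c j * β j)
  let T : ℕ → F := fun j => d^[j] y - β j
  have hT : ∀ j, T (j+1) = d (T j) - b (v j) := fun j => by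
    simp only [T, Function.iterate_succ_apply', d_sub hd, hβ]; ring
  have hTk : T k = φ w + ∑ j : Fin k, c j * T j := by
    rw [Finset.sum_range_succ, Finset.sum_range] at hy
    simp only [a, Fin.is_lt, dif_pos, lt_irrefl, dif_neg, not_false_eq_true, Fin.eta, one_mul,
      neg_mul, Finset.sum_neg_distrib] at hy
    simp only [T, mul_sub, Finset.sum_sub_distrib]
    linear_combination hy
  -- functional
  obtain ⟨ψ, hψ⟩ : ∃ ψ : (V ⧸ W) →ₗ[F] F, ∀ j : Fin k, ψ (x j) = T j - φ (v j) := by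
    obtain ⟨ψ, hψ⟩ := LinearMap.exists_extend
      ((Module.Basis.span hkm).constr F (fun j : Fin k => T j - φ (v j)))
    refine ⟨ψ, fun j => ?_⟩
    have h1 := LinearMap.congr_fun hψ (Module.Basis.span hkm j)
    rw [Module.Basis.constr_basis] at h1
    rw [← h1, LinearMap.comp_apply]
    congr 1
    simp [Module.Basis.span_apply]
  set φ' : V →ₗ[F] F := φ + ψ ∘ₗ W.mkQ with hφ'
  have hφW : ∀ u ∈ W, φ' u = φ u := fun u hu => by
    have : W.mkQ u = 0 := by simpa using hu
    simp only [hφ', LinearMap.add_apply, LinearMap.comp_apply, this, map_zero, add_zero]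
  have hφv : ∀ j, j < k → φ' (v j) = T j := fun j hj => by
    have := hψ ⟨j, hj⟩
    simp only [hφ', LinearMap.add_apply, LinearMap.comp_apply]
    simp only [hx] at this
    rw [this]; ring
  have hvk : v k = w + ∑ j : Fin k, c j • v j := by rw [hw]; abel
  have hφk : φ' (v k) = T k := by
    rw [hvk, map_add, map_sum, hφW w hwW, hTk]
    congr 1
    refine Finset.sum_congr rfl fun j _ => ?_
    rw [map_smul, hφv j j.2, smul_eq_mul]
  set W' : Submodule F V := W ⊔ Submodule.span F (Set.range (fun j : Fin k => v j)) with hW'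
  have hvW' : ∀ j, j < k → v j ∈ W' := fun j hj =>
    Submodule.mem_sup_right (Submodule.subset_span ⟨⟨j, hj⟩, rfl⟩)
  have hvkW' : v k ∈ W' := by
    rw [hvk]
    exact Submodule.add_mem _ (Submodule.mem_sup_left hwW)
      (Submodule.sum_mem _ fun j _ => Submodule.smul_mem _ _ (hvW' j j.2))
  have hle : ∀ j, j ≤ k → v j ∈ W' := fun j hj => by
    rcases hj.lt_or_eq with h | h
    · exact hvW' j h
    · rw [h]; exact hvkW'
  have hφle : ∀ j, j ≤ k → φ' (v j) = T j := fun j hj => by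
    rcases hj.lt_or_eq with h | h
    · exact hφv j h
    · rw [h]; exact hφk
  refine ⟨W', ?_, ?_, φ', ?_⟩
  · refine lt_of_le_of_ne le_sup_left fun h => hv0 ?_
    rw [h]; exact hle 0 (Nat.zero_le _)
  · let Q : Submodule F V :=
      { carrier := {u | u ∈ W' ∧ nab u ∈ W'}
        add_mem' := fun {a b} ha hb => ⟨W'.add_mem ha.1 hb.1, by
          rw [map_add]; exact W'.add_mem ha.2 hb.2⟩
        zero_mem' := ⟨W'.zero_mem, by rw [map_zero]; exact W'.zero_mem⟩
        smul_mem' := fun c u hu => ⟨W'.smul_mem _ hu.1, by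
          rw [hn]; exact W'.add_mem (W'.smul_mem _ hu.1) (W'.smul_mem _ hu.2)⟩ }
    have : W' ≤ Q := by
      refine sup_le (fun u hu => ⟨Submodule.mem_sup_left hu, Submodule.mem_sup_left (hW u hu)⟩) ?_
      rw [Submodule.span_le]
      rintro _ ⟨j, rfl⟩
      exact ⟨hvW' j j.2, by rw [hvs]; exact hle _ j.2⟩
    exact fun u hu => (this hu).2
  · refine sup_le (fun u hu => ?_) ?_
    · have := hφ hu
      rw [LinearMap.mem_ker] at this ⊢
      change d (φ u) - φ (nab u) - b u = 0 at this
      change d (φ' u) - φ' (nab u) - b u = 0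
      rw [hφW u hu, hφW _ (hW u hu), this]
    · rw [Submodule.span_le]
      rintro _ ⟨j, rfl⟩
      change defect hd nab hn b φ' (v j) = 0
      change d (φ' (v j)) - φ' (nab (v j)) - b (v j) = 0
      rw [hvs, hφle _ j.2.le, hφle _ j.2, hT]; ring

lemma solve_abs [FiniteDimensional F V] (hd : IsDerivation d) (hlc : LinearlyClosed d)
    (nab : V →+ V)
    (hn : ∀ (f : F) (v : V), nab (f • v) = d f • v + f • nab v)
    (b : V →ₗ[F] F) : ∃ φ : V →ₗ[F] F, ∀ v, d (φ v) = φ (nab v) + b v := by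
  let P : Set (Submodule F V) := {W | (∀ v ∈ W, nab v ∈ W) ∧ ∃ φ : V →ₗ[F] F,
      W ≤ LinearMap.ker (defect hd nab hn b φ)}
  have hne : P.Nonempty := ⟨⊥, by
    intro v hv
    rw [Submodule.mem_bot] at hv ⊢
    rw [hv, map_zero], 0, bot_le⟩
  obtain ⟨W, ⟨hW, φ, hφ⟩, hmax⟩ := set_has_maximal_iff_noetherian.2
    (inferInstance : IsNoetherian F V) P hne
  have htop : ∀ v, v ∈ W := by
    by_contra! h
    obtain ⟨v0, hv0⟩ := h
    obtain ⟨W', h1, h2, h3⟩ := ext_step hd hlc nab hn b W hW φ hφ v0 hv0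
    exact hmax W' ⟨h2, h3⟩ h1
  refine ⟨φ, fun v => ?_⟩
  have : d (φ v) - φ (nab v) - b v = 0 := hφ (htop v)
  linear_combination this

lemma solve_sys {ι : Type*} [Fintype ι] [DecidableEq ι] (hd : IsDerivation d)
    (hlc : LinearlyClosed d) (L : (ι → F) →ₗ[F] (ι → F)) (b : ι → F) :
    ∃ u : ι → F, ∀ i, d (u i) = L u i + b i := by
  let A := LinearMap.toMatrix' L
  let nab : (ι → F) →+ (ι → F) := AddMonoidHom.mk' (fun v => (fun i => d (v i)) + v ᵥ* A)
    (fun x y => by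
      funext i
      simp only [Matrix.add_vecMul, Pi.add_apply, hd.map_add]; ring)
  obtain ⟨φ, hφ⟩ := solve_abs hd hlc nab (fun f v => by
    funext i
    simp [nab, hd.leibniz, Matrix.smul_vecMul]; ring) (Fintype.linearCombination F b)
  refine ⟨fun i => φ (Pi.single i 1), fun i => ?_⟩
  rw [hφ]
  congr 1
  · have h0 : nab (Pi.single i 1) = A.row i := by
      funext j
      have : d ((Pi.single i (1:F) : ι → F) j) = 0 := by
        by_cases h : j = i
        · subst h; simp [d_one hd]
        · simp [h, d_zero hd]
      simp [nab, this]
    rw [h0]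
    have h1 : A.row i = ∑ j, A i j • (Pi.single j (1:F) : ι → F) := by
      funext j
      simp [Finset.sum_apply, Pi.single_apply]
    rw [h1, map_sum]
    have h2 : L = Matrix.toLin' A := by simp [A]
    rw [h2]
    simp [Matrix.mulVec, dotProduct]
  · simp [Fintype.linearCombination_apply, Pi.single_apply]

end A
end S8
namespace S8
open Finset Matrix

section B
variable {F : Type*} [Field F] {d : F → F} (hd : IsDerivation d) (l : ℕ)

/-- componentwise derivation -/
def DD : Module.End ℤ (Fin l → F) :=
  (AddMonoidHom.mk' (fun u j => d (u j)) (fun x y => by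
    funext j; simp [hd.map_add])).toIntLinearMap

/-- matrix multiplication -/
def mv : Matrix (Fin l) (Fin l) F →+* Module.End ℤ (Fin l → F) where
  toFun a := (AddMonoidHom.mk' (fun u => a *ᵥ u) (fun x y => Matrix.mulVec_add _ _ _)).toIntLinearMap
  map_one' := by refine LinearMap.ext fun u => ?_; exact Matrix.one_mulVec u
  map_mul' a b := by refine LinearMap.ext fun u => ?_; exact (Matrix.mulVec_mulVec u a b).symm
  map_zero' := by refine LinearMap.ext fun u => ?_; exact Matrix.zero_mulVec u
  map_add' a b := by refine LinearMap.ext fun u => ?_; exact Matrix.add_mulVec a b u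

variable {l}

lemma DD_mv (a : Matrix (Fin l) (Fin l) F) :
    DD hd l * mv l a = mv l (a.map d) + mv l a * DD hd l := by
  refine LinearMap.ext fun u => ?_
  funext i
  change d ((a *ᵥ u) i) = ((a.map d) *ᵥ u) i + (a *ᵥ (fun j => d (u j))) i
  simp only [Matrix.mulVec, dotProduct, d_sum hd, hd.leibniz, Finset.sum_add_distrib,
    Matrix.map_apply]

lemma DD_pow (n : ℕ) (u : Fin l → F) (i : Fin l) : ((DD hd l)^n) u i = d^[n] (u i) := by
  induction n generalizing u with
  | zero => rfl
  | succ n ih =>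
    rw [pow_succ, Function.iterate_succ_apply]
    exact ih _

/-- operator with adjoint -/
def IsOp (f g : Module.End ℤ (Fin l → F)) : Prop :=
  ∃ (M : ℕ) (A : ℕ → Matrix (Fin l) (Fin l) F), (∀ n, M ≤ n → A n = 0) ∧
    f = ∑ n ∈ range M, mv l (A n) * DD hd l ^ n ∧
    g = ∑ n ∈ range M, (-DD hd l) ^ n * mv l (A n)ᵀ

variable {hd}

lemma pad {E : Type*} [AddCommMonoid E] {f : ℕ → E} {M M' : ℕ} (h : ∀ n, M ≤ n → f n = 0)
    (hM : M ≤ M') : ∑ n ∈ range M, f n = ∑ n ∈ range M', f n := by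
  refine Finset.sum_subset (by simpa using hM) fun n _ hn => h n (by simpa using hn)

lemma IsOp.ext {f g : Module.End ℤ (Fin l → F)} (h : IsOp hd f g) :
  ∃ (M : ℕ) (A : ℕ → Matrix (Fin l) (Fin l) F), (∀ n, M ≤ n → A n = 0) ∧ ∀ m, M ≤ m →
    f = ∑ n ∈ range m, mv l (A n) * DD hd l ^ n ∧
    g = ∑ n ∈ range m, (-DD hd l) ^ n * mv l (A n)ᵀ := by
  obtain ⟨M, A, hA, rfl, rfl⟩ := h
  refine ⟨M, A, hA, fun m hm => ⟨pad (fun n hn => ?_) hm, pad (fun n hn => ?_) hm⟩⟩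
  · rw [hA n hn]; simp
  · rw [hA n hn]; simp

lemma IsOp.one : IsOp hd (1 : Module.End ℤ (Fin l → F)) 1 :=
  ⟨1, fun n => if n = 0 then 1 else 0, fun n hn => by simp; omega, by simp, by simp⟩

lemma IsOp.zero : IsOp hd (0 : Module.End ℤ (Fin l → F)) 0 :=
  ⟨0, 0, by simp, by simp, by simp⟩

lemma IsOp.add {f g f' g' : Module.End ℤ (Fin l → F)} (h : IsOp hd f g) (h' : IsOp hd f' g') :
    IsOp hd (f + f') (g + g') := by
  obtain ⟨M, A, hA, h⟩ := h.ext
  obtain ⟨M', A', hA', h'⟩ := h'.ext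
  refine ⟨max M M', A + A', fun n hn => ?_, ?_, ?_⟩
  · simp [hA n (by omega), hA' n (by omega)]
  · rw [(h _ (le_max_left M M')).1, (h' _ (le_max_right M M')).1, ← Finset.sum_add_distrib]
    simp [add_mul]
  · rw [(h _ (le_max_left M M')).2, (h' _ (le_max_right M M')).2, ← Finset.sum_add_distrib]
    simp [mul_add]

lemma IsOp.sum {ι : Type*} (s : Finset ι) {f g : ι → Module.End ℤ (Fin l → F)}
    (h : ∀ i ∈ s, IsOp hd (f i) (g i)) : IsOp hd (∑ i ∈ s, f i) (∑ i ∈ s, g i) := by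
  classical
  induction s using Finset.induction_on with
  | empty => simpa using IsOp.zero
  | insert a s ha ih =>
    rw [Finset.sum_insert ha, Finset.sum_insert ha]
    exact (h a (by simp)).add (ih fun i hi => h i (by simp [hi]))

lemma IsOp.mvl {f g : Module.End ℤ (Fin l → F)} (h : IsOp hd f g) (a) :
    IsOp hd (mv l a * f) (g * mv l aᵀ) := by
  obtain ⟨M, A, hA, rfl, rfl⟩ := h
  refine ⟨M, fun n => a * A n, fun n hn => by simp [hA n hn], ?_, ?_⟩
  · simp [Finset.mul_sum, mul_assoc]
  · simp [Finset.sum_mul, mul_assoc]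

lemma map_d_zero (hd : IsDerivation d) : (0 : Matrix (Fin l) (Fin l) F).map d = 0 := by
  ext i j; simp [d_zero hd]

lemma map_d_transpose (a : Matrix (Fin l) (Fin l) F) : (a.map d)ᵀ = (aᵀ).map d := rfl

lemma IsOp.dl {f g : Module.End ℤ (Fin l → F)} (h : IsOp hd f g) :
    IsOp hd (DD hd l * f) (g * (-DD hd l)) := by
  obtain ⟨M, A, hA, h⟩ := h.ext
  have hA' : ∀ n, M ≤ n → (A n).map d = 0 := fun n hn => by
    rw [hA n hn]; exact map_d_zero hd
  refine ⟨M+1, fun n => (A n).map d + (if n = 0 then 0 else A (n-1)), fun n hn => ?_, ?_, ?_⟩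
  · change (A n).map d + (if n = 0 then 0 else A (n-1)) = 0
    rw [hA' n (by omega), hA (n-1) (by omega)]; simp
  · simp only [map_add, add_mul, Finset.sum_add_distrib]
    rw [← pad (M := M) (fun n hn => by rw [hA' n hn]; simp) (Nat.le_succ M),
      Finset.sum_range_succ' (fun n => mv l (if n = 0 then 0 else A (n-1)) * DD hd l ^ n)]
    simp only [if_true, map_zero, zero_mul, add_zero, Nat.succ_ne_zero, if_false,
      Nat.add_sub_cancel]
    rw [(h M le_rfl).1, Finset.mul_sum, ← Finset.sum_add_distrib]
    refine Finset.sum_congr rfl fun n _ => ?_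
    rw [← mul_assoc, DD_mv, add_mul, mul_assoc, ← pow_succ']
  · simp only [transpose_add, map_add, mul_add, Finset.sum_add_distrib]
    rw [← pad (M := M) (fun n hn => by rw [hA' n hn]; simp) (Nat.le_succ M),
      Finset.sum_range_succ' (fun n => (-DD hd l) ^ n * mv l (if n = 0 then 0 else A (n-1))ᵀ)]
    simp only [if_true, map_zero, mul_zero, add_zero, Nat.succ_ne_zero, if_false,
      Nat.add_sub_cancel, transpose_zero]
    rw [(h M le_rfl).2, Finset.sum_mul, ← Finset.sum_add_distrib]
    refine Finset.sum_congr rfl fun n _ => ?_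
    rw [pow_succ, mul_assoc, mul_assoc, ← mul_add, map_d_transpose, neg_mul, DD_mv]
    congr 1
    noncomm_ring

lemma IsOp.dpow {f g : Module.End ℤ (Fin l → F)} (h : IsOp hd f g) (r : ℕ) :
    IsOp hd (DD hd l ^ r * f) (g * (-DD hd l) ^ r) := by
  induction r with
  | zero => simpa using h
  | succ r ih =>
    have := ih.dl
    rwa [← mul_assoc, ← pow_succ', mul_assoc, ← pow_succ] at this

lemma IsOp.neg {f g : Module.End ℤ (Fin l → F)} (h : IsOp hd f g) :
    IsOp hd (-f) (-g) := by
  simpa using h.mvl (-1)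

lemma IsOp.negdpow {f g : Module.End ℤ (Fin l → F)} (h : IsOp hd f g) (r : ℕ) :
    IsOp hd ((-DD hd l) ^ r * f) (g * (DD hd l) ^ r) := by
  induction r with
  | zero => simpa using h
  | succ r ih =>
    have := ih.dl.neg
    rw [← neg_mul, ← mul_assoc, ← pow_succ', mul_neg, neg_neg, mul_assoc, ← pow_succ] at this
    exact this

/-- right form -/
def RF (hd : IsDerivation d) (N : ℕ) (f g : Module.End ℤ (Fin l → F)) : Prop :=
  ∃ (c : ℕ → Matrix (Fin l) (Fin l) F), 
    f = ∑ n ∈ range N, DD hd l ^ n * mv l (c n) ∧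
    g = ∑ n ∈ range N, mv l (c n)ᵀ * (-DD hd l) ^ n

lemma RF.zero (N : ℕ) : RF (l := l) hd N 0 0 := ⟨0, by simp, by simp⟩

lemma RF.add {N : ℕ} {f g f' g' : Module.End ℤ (Fin l → F)} (h : RF hd N f g)
    (h' : RF hd N f' g') : RF hd N (f + f') (g + g') := by
  obtain ⟨c, rfl, rfl⟩ := h
  obtain ⟨c', rfl, rfl⟩ := h'
  exact ⟨c + c', by simp [mul_add, Finset.sum_add_distrib], by
    simp [add_mul, Finset.sum_add_distrib]⟩

lemma RF.mvr {N : ℕ} {f g : Module.End ℤ (Fin l → F)} (h : RF hd N f g)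
    (a) : RF hd N (f * mv l a) (mv l aᵀ * g) := by
  obtain ⟨c, rfl, rfl⟩ := h
  exact ⟨fun n => c n * a, by simp [Finset.sum_mul, mul_assoc], by
    simp [Finset.mul_sum, mul_assoc]⟩

lemma RF.neg {N : ℕ} {f g : Module.End ℤ (Fin l → F)} (h : RF hd N f g) :
    RF hd N (-f) (-g) := by
  simpa using h.mvr (-1)

lemma RF.sub {N : ℕ} {f g f' g' : Module.End ℤ (Fin l → F)} (h : RF hd N f g)
    (h' : RF hd N f' g') : RF hd N (f - f') (g - g') := by
  rw [sub_eq_add_neg, sub_eq_add_neg]; exact h.add h'.neg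

lemma RF.sum {ι : Type*} (s : Finset ι) {N : ℕ} {f g : ι → Module.End ℤ (Fin l → F)}
    (h : ∀ i ∈ s, RF hd N (f i) (g i)) : RF hd N (∑ i ∈ s, f i) (∑ i ∈ s, g i) := by
  classical
  induction s using Finset.induction_on with
  | empty => simpa using RF.zero N
  | insert a s ha ih =>
    rw [Finset.sum_insert ha, Finset.sum_insert ha]
    exact (h a (by simp)).add (ih fun i hi => h i (by simp [hi]))

lemma RF.single {n N : ℕ} (h : n < N) (a : Matrix (Fin l) (Fin l) F) :
    RF hd N (DD hd l ^ n * mv l a) (mv l aᵀ * (-DD hd l) ^ n) := by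
  refine ⟨fun i => if i = n then a else 0, ?_, ?_⟩
  · rw [Finset.sum_eq_single n] <;> simp +contextual [h.not_ge]
  · rw [Finset.sum_eq_single n] <;> simp +contextual [h.not_ge]

lemma RF.mono {n N : ℕ} (hn : n ≤ N) {f g : Module.End ℤ (Fin l → F)} (h : RF hd n f g) :
    RF hd N f g := by
  obtain ⟨c, rfl, rfl⟩ := h
  refine RF.sum _ fun i hi => RF.single ?_ _
  have := Finset.mem_range.1 hi
  omega

lemma RF.dl {N : ℕ} {f g : Module.End ℤ (Fin l → F)} (h : RF hd N f g) :
    RF hd (N+1) (DD hd l * f) (g * (-DD hd l)) := by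
  obtain ⟨c, rfl, rfl⟩ := h
  rw [Finset.mul_sum, Finset.sum_mul]
  refine RF.sum _ fun i hi => ?_
  rw [← mul_assoc, ← pow_succ', mul_assoc, ← pow_succ]
  exact RF.single (by simpa using hi) _

lemma RF.comm (m : ℕ) (a : Matrix (Fin l) (Fin l) F) :
    RF hd m (mv l a * DD hd l ^ m - DD hd l ^ m * mv l a)
      ((-DD hd l) ^ m * mv l aᵀ - mv l aᵀ * (-DD hd l) ^ m) := by
  induction m generalizing a with
  | zero => simpa using RF.zero 0
  | succ m ih =>
    have h := ((ih a).dl.sub ((ih (a.map d)).mono (Nat.le_succ m))).sub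
      (RF.single (Nat.lt_succ_self m) (a.map d))
    have e1 := DD_mv hd a
    have e2 := DD_mv hd aᵀ
    rw [← map_d_transpose] at e2
    convert h using 1
    · have : mv l a * DD hd l = DD hd l * mv l a - mv l (a.map d) := by rw [e1]; abel
      rw [pow_succ' _ m, ← mul_assoc, this]
      noncomm_ring
    · have : mv l (a.map d)ᵀ = DD hd l * mv l aᵀ - mv l aᵀ * DD hd l := by rw [e2]; abel
      rw [this, pow_succ _ m]
      noncomm_ring

/-- telescoping identity -/
lemma key {E : Type*} [Ring E] (D : E) (p : ℕ) (w w' : ℕ → ℕ → E) (k kt : ℕ → E)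
    (hw : ∀ i j, D * w i j = w' i j + w i j * D) :
    ∑ i ∈ range (p+1), ∑ j ∈ range (p+1), D ^ i * (w' i j - (if i = 0 then 0 else w (i-1) j)
      + k i * w p j - (if j = 0 then 0 else w i (j-1)) + w i p * kt j) * (-D) ^ j
    = (D ^ (p+1) + ∑ i ∈ range (p+1), D ^ i * k i) * (∑ j ∈ range (p+1), w p j * (-D) ^ j)
    + (∑ i ∈ range (p+1), D ^ i * w i p) * ((-D) ^ (p+1) + ∑ j ∈ range (p+1), kt j * (-D) ^ j) := by
  have tel1 : ∀ j, ∑ i ∈ range (p+1), (D ^ (i+1) * w i j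
      - D ^ i * (if i = 0 then 0 else w (i-1) j)) = D ^ (p+1) * w p j := fun j => by
    rw [Finset.sum_sub_distrib, Finset.sum_range_succ,
      Finset.sum_range_succ' (fun i => D ^ i * (if i = 0 then 0 else w (i-1) j))]
    simp
  have tel2 : ∀ i, ∑ j ∈ range (p+1), (w i j * (-D) ^ (j+1)
      - (if j = 0 then 0 else w i (j-1)) * (-D) ^ j) = w i p * (-D) ^ (p+1) := fun i => by
    rw [Finset.sum_sub_distrib, Finset.sum_range_succ,
      Finset.sum_range_succ' (fun j => (if j = 0 then 0 else w i (j-1)) * (-D) ^ j)]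
    simp
  have e : ∀ i j, D ^ i * (w' i j - (if i = 0 then 0 else w (i-1) j)
      + k i * w p j - (if j = 0 then 0 else w i (j-1)) + w i p * kt j) * (-D) ^ j
      = (D ^ (i+1) * w i j - D ^ i * (if i = 0 then 0 else w (i-1) j)) * (-D) ^ j
      + D ^ i * (w i j * (-D) ^ (j+1) - (if j = 0 then 0 else w i (j-1)) * (-D) ^ j)
      + (D ^ i * k i) * (w p j * (-D) ^ j) + (D ^ i * w i p) * (kt j * (-D) ^ j) := fun i j => by
    have : w' i j = D * w i j - w i j * D := by rw [hw]; abel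
    rw [this, pow_succ, pow_succ']
    generalize (-D) ^ j = z
    noncomm_ring
  simp only [e, Finset.sum_add_distrib]
  rw [Finset.sum_comm]
  simp only [← Finset.sum_mul, ← Finset.mul_sum, tel1, tel2]
  simp only [← mul_assoc, ← Finset.sum_mul]
  simp only [mul_assoc, ← Finset.mul_sum]
  noncomm_ring

end B
end S8
namespace S8
open Finset Matrix

section C
variable {F : Type*} [Field F] {d : F → F} {l : ℕ}

/-- unpack the unknowns -/
def unp (p l : ℕ) (u : Fin (p+1) × Fin (p+1) × Fin l × Fin l → F) (i j : ℕ) :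
    Matrix (Fin l) (Fin l) F :=
  Matrix.of fun a b => if h : i < p+1 ∧ j < p+1 then u (⟨i, h.1⟩, ⟨j, h.2⟩, a, b) else 0

lemma unp_add (p : ℕ) (u v : Fin (p+1) × Fin (p+1) × Fin l × Fin l → F) (i j : ℕ) :
    unp p l (u + v) i j = unp p l u i j + unp p l v i j := by
  ext a b
  simp only [unp, Matrix.of_apply, Matrix.add_apply, Matrix.smul_apply]
  split_ifs <;> simp

lemma unp_smul (p : ℕ) (c : F) (u : Fin (p+1) × Fin (p+1) × Fin l × Fin l → F) (i j : ℕ) :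
    unp p l (c • u) i j = c • unp p l u i j := by
  ext a b
  simp only [unp, Matrix.of_apply, Matrix.add_apply, Matrix.smul_apply]
  split_ifs <;> simp

/-- right hand side -/
def rhs (p : ℕ) (k : ℕ → Matrix (Fin l) (Fin l) F) (w : ℕ → ℕ → Matrix (Fin l) (Fin l) F)
    (i j : ℕ) : Matrix (Fin l) (Fin l) F :=
  (if i = 0 then 0 else w (i-1) j) - k i * w p j + (if j = 0 then 0 else w i (j-1))
    - w i p * (k j)ᵀ

lemma rhs_add (p : ℕ) (k : ℕ → Matrix (Fin l) (Fin l) F)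
    (w w' : ℕ → ℕ → Matrix (Fin l) (Fin l) F) (i j : ℕ) :
    rhs p k (fun i j => w i j + w' i j) i j = rhs p k w i j + rhs p k w' i j := by
  unfold rhs
  split_ifs <;> simp only [mul_add, add_mul] <;> abel

lemma rhs_smul (p : ℕ) (k : ℕ → Matrix (Fin l) (Fin l) F) (c : F)
    (w : ℕ → ℕ → Matrix (Fin l) (Fin l) F) (i j : ℕ) :
    rhs p k (fun i j => c • w i j) i j = c • rhs p k w i j := by
  unfold rhs
  split_ifs <;> simp [smul_sub, smul_add]

lemma rhs_tr (p : ℕ) (k : ℕ → Matrix (Fin l) (Fin l) F)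
    (w : ℕ → ℕ → Matrix (Fin l) (Fin l) F) (i j : ℕ) :
    rhs p k (fun i j => (w j i)ᵀ) i j = (rhs p k w j i)ᵀ := by
  unfold rhs
  split_ifs <;> simp <;> abel

lemma half_d [CharZero F] (hd : IsDerivation d) (x : F) : d ((2:F)⁻¹ * x) = (2:F)⁻¹ * d x := by
  have h : d x = d ((2:F)⁻¹ * x) + d ((2:F)⁻¹ * x) := by
    rw [← hd.map_add]; congr 1; ring
  rw [h]; ring

lemma sys [CharZero F] (hd : IsDerivation d) (hlc : LinearlyClosed d) (p : ℕ)
    (k : ℕ → Matrix (Fin l) (Fin l) F) (σ : ℕ → ℕ → Matrix (Fin l) (Fin l) F)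
    (hσ : ∀ i j, σ j i = -(σ i j)ᵀ) :
    ∃ w : ℕ → ℕ → Matrix (Fin l) (Fin l) F, (∀ i j, (w i j)ᵀ = -(w j i)) ∧
      ∀ i j, i < p+1 → j < p+1 → (w i j).map d = rhs p k w i j + σ i j := by
  let L : (Fin (p+1) × Fin (p+1) × Fin l × Fin l → F) →ₗ[F]
      (Fin (p+1) × Fin (p+1) × Fin l × Fin l → F) :=
    { toFun := fun u q => rhs p k (unp p l u) q.1 q.2.1 q.2.2.1 q.2.2.2
      map_add' := fun u v => by
        funext q
        have : unp p l (u + v) = fun i j => unp p l u i j + unp p l v i j := by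
          funext i j; exact unp_add p u v i j
        simp only [this, rhs_add]; rfl
      map_smul' := fun c u => by
        funext q
        have : unp p l (c • u) = fun i j => c • unp p l u i j := by
          funext i j; exact unp_smul p c u i j
        simp only [this, rhs_smul]; rfl }
  obtain ⟨u, hu⟩ := solve_sys hd hlc L (fun q => σ q.1 q.2.1 q.2.2.1 q.2.2.2)
  set x := unp p l u with hx
  have hxe : ∀ i j, i < p+1 → j < p+1 → (x i j).map d = rhs p k x i j + σ i j := by
    intro i j hi hj
    ext a b
    have := hu (⟨i, hi⟩, ⟨j, hj⟩, a, b)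
    have h2 : x i j a b = u (⟨i, hi⟩, ⟨j, hj⟩, a, b) := by simp [hx, unp, hi, hj]
    rw [Matrix.map_apply, h2, this]
    rfl
  refine ⟨fun i j => (2:F)⁻¹ • (x i j + (-1 : F) • (x j i)ᵀ), fun i j => ?_, fun i j hi hj => ?_⟩
  · simp [← smul_neg]
  · rw [rhs_smul, rhs_add, rhs_smul, rhs_tr]
    have e : ((2:F)⁻¹ • (x i j + (-1 : F) • (x j i)ᵀ)).map d
        = (2:F)⁻¹ • ((x i j).map d + (-1 : F) • ((x j i).map d)ᵀ) := by
      ext a b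
      simp [half_d hd, hd.map_add, d_neg hd, -mul_eq_mul_left_iff]
      ring
    rw [e, hxe i j hi hj, hxe j i hj hi, hσ i j]
    ext a b
    simp
    field_simp
    ring

/-- coefficient matrices -/
def cm (A : Fin l → Fin l → ℕ → F) (n : ℕ) : Matrix (Fin l) (Fin l) F :=
  Matrix.of fun i j => A i j n

lemma matOp_eq (hd : IsDerivation d) (M : ℕ) (A : Fin l → Fin l → ℕ → F) (u : Fin l → F) :
    matOp d M A u = (∑ n ∈ range (M+1), mv l (cm A n) * DD hd l ^ n) u := by
  funext i
  rw [LinearMap.sum_apply, Finset.sum_apply]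
  unfold matOp
  rw [Finset.sum_comm]
  refine Finset.sum_congr rfl fun n _ => ?_
  change _ = (cm A n *ᵥ (DD hd l ^ n) u) i
  simp [Matrix.mulVec, dotProduct, DD_pow, cm]

lemma neg_pow_apply (hd : IsDerivation d) (n : ℕ) (u : Fin l → F) (i : Fin l) :
    ((-DD hd l) ^ n) u i = (-1)^n * d^[n] (u i) := by
  rw [← DD_pow hd, neg_pow]
  rcases Nat.even_or_odd n with h | h <;> simp [h.neg_one_pow]

lemma matOpAdj_eq (hd : IsDerivation d) (M : ℕ) (A : Fin l → Fin l → ℕ → F) (u : Fin l → F) :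
    matOpAdj d M A u = (∑ n ∈ range (M+1), (-DD hd l) ^ n * mv l (cm A n)ᵀ) u := by
  funext i
  rw [LinearMap.sum_apply, Finset.sum_apply]
  unfold matOpAdj
  rw [Finset.sum_comm]
  refine Finset.sum_congr rfl fun n hn => ?_
  clear hn
  change _ = ((-DD hd l) ^ n) ((cm A n)ᵀ *ᵥ u) i
  rw [neg_pow_apply, ← Finset.mul_sum]
  congr 1
  have : ∀ s : Finset (Fin l), ∀ f : Fin l → F, d^[n] (∑ j ∈ s, f j) = ∑ j ∈ s, d^[n] (f j) := by
    intro s f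
    clear u
    induction n with
    | zero => rfl
    | succ n ih => simp only [Function.iterate_succ_apply', ih, d_sum hd]
  rw [← this]
  simp [Matrix.mulVec, dotProduct, cm]

lemma IsOp.real {hd : IsDerivation d} {f g : Module.End ℤ (Fin l → F)} (h : IsOp hd f g) :
    ∃ M A, ∀ u : Fin l → F, matOp d M A u = f u ∧ matOpAdj d M A u = g u := by
  obtain ⟨M, A, hA, h⟩ := h.ext
  refine ⟨M, fun i j n => A n i j, fun u => ?_⟩
  rw [matOp_eq hd, matOpAdj_eq hd, (h (M+1) (Nat.le_succ M)).1, (h (M+1) (Nat.le_succ M)).2]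
  exact ⟨rfl, rfl⟩

lemma mainE [CharZero F] (hd : IsDerivation d) (hlc : LinearlyClosed d) (N MS : ℕ)
    (K t : ℕ → Matrix (Fin l) (Fin l) F) (b : Matrix (Fin l) (Fin l) F) (hb : K N * b = 1) :
    ∃ P Pg : Module.End ℤ (Fin l → F), IsOp hd P Pg ∧
      (∑ n ∈ range (N+1), mv l (K n) * DD hd l ^ n) * P
        - Pg * (∑ n ∈ range (N+1), (-DD hd l) ^ n * mv l (K n)ᵀ)
      = (∑ n ∈ range (MS+1), mv l (t n) * DD hd l ^ n)
        - ∑ n ∈ range (MS+1), (-DD hd l) ^ n * mv l (t n)ᵀ := by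
  set D := DD hd l with hD
  set Kf := ∑ n ∈ range (N+1), mv l (K n) * D ^ n with hKf
  set Kg := ∑ n ∈ range (N+1), (-D) ^ n * mv l (K n)ᵀ with hKg
  set p := N + MS with hp
  have hrf : RF hd (p+1) (Kf * D ^ (MS+1) * mv l b - D ^ (p+1))
      (mv l bᵀ * ((-D) ^ (MS+1) * Kg) - (-D) ^ (p+1)) := by
    have h1 : RF hd (p+1)
        ((∑ n ∈ range (N+1), (mv l (K n) * D ^ (n+(MS+1)) - D ^ (n+(MS+1)) * mv l (K n))
          + ∑ n ∈ range N, D ^ (n+(MS+1)) * mv l (K n)) * mv l b)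
        (mv l bᵀ * (∑ n ∈ range (N+1),
          ((-D) ^ (n+(MS+1)) * mv l (K n)ᵀ - mv l (K n)ᵀ * (-D) ^ (n+(MS+1)))
          + ∑ n ∈ range N, mv l (K n)ᵀ * (-D) ^ (n+(MS+1)))) := by
      refine RF.mvr (RF.add (RF.sum _ fun n hn => ?_) (RF.sum _ fun n hn => ?_)) b
      · have := Finset.mem_range.1 hn
        exact (RF.comm _ _).mono (by omega)
      · have := Finset.mem_range.1 hn
        exact RF.single (by omega) _
    have hpn : p + 1 = N + (MS+1) := by omega
    convert h1 using 1
    · rw [Finset.sum_sub_distrib, Finset.sum_range_succ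
        (fun n => D ^ (n+(MS+1)) * mv l (K n)), hKf, Finset.sum_mul]
      simp only [mul_assoc, ← pow_add]
      have : D ^ (p+1) = D ^ (N+(MS+1)) * mv l (K N) * mv l b := by
        rw [mul_assoc, ← map_mul, hb, map_one, mul_one, hpn]
      rw [this]
      noncomm_ring
    · rw [Finset.sum_sub_distrib, Finset.sum_range_succ
        (fun n => mv l (K n)ᵀ * (-D) ^ (n+(MS+1))), hKg, Finset.mul_sum]
      simp only [← mul_assoc, ← pow_add]
      simp only [add_comm (MS+1)]
      have : (-D) ^ (p+1) = mv l bᵀ * (mv l (K N)ᵀ * (-D) ^ (N+(MS+1))) := by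
        rw [← mul_assoc, ← map_mul, ← transpose_mul, hb, transpose_one, map_one, one_mul, hpn]
      rw [this]
      generalize (-D) ^ (N+(MS+1)) = z
      simp only [mul_sub, mul_add]
      abel
  obtain ⟨k, hk1, hk2⟩ := hrf
  rw [sub_eq_iff_eq_add'] at hk1 hk2
  let τ : ℕ → Matrix (Fin l) (Fin l) F := fun j => if j < MS+1 then (-1:F)^j • t j else 0
  let σ : ℕ → ℕ → Matrix (Fin l) (Fin l) F := fun i j =>
    (if i = 0 then τ j else 0) - (if j = 0 then (τ i)ᵀ else 0)
  obtain ⟨w, hws, hw⟩ := sys hd hlc p k σ (fun i j => by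
    simp only [σ]
    split_ifs <;> simp)
  have hkey := key D p (fun i j => mv l (w i j)) (fun i j => mv l ((w i j).map d))
    (fun i => mv l (k i)) (fun i => mv l (k i)ᵀ) (fun i j => DD_mv hd _)
  rw [← hk1, ← hk2] at hkey
  refine ⟨D ^ (MS+1) * (mv l b * ∑ j ∈ range (p+1), mv l (w p j) * (-D) ^ j),
    (∑ j ∈ range (p+1), D ^ j * mv l (w p j)ᵀ) * mv l bᵀ * (-D) ^ (MS+1), ?_, ?_⟩
  · refine ((IsOp.sum _ fun j _ => ?_).mvl b).dpow _
    have := ((IsOp.one (hd := hd) (l := l)).negdpow j).mvl (w p j)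
    simpa using this
  · have e1 : ∑ j ∈ range (p+1), D ^ j * mv l (w p j)ᵀ
        = - ∑ j ∈ range (p+1), D ^ j * mv l (w j p) := by
      simp [hws, Finset.sum_neg_distrib]
    rw [e1]
    have e2 : ∀ i ∈ range (p+1), ∀ j ∈ range (p+1),
        D ^ i * (mv l ((w i j).map d) - (if i = 0 then 0 else mv l (w (i-1) j))
          + mv l (k i) * mv l (w p j) - (if j = 0 then 0 else mv l (w i (j-1)))
          + mv l (w i p) * mv l (k j)ᵀ) * (-D) ^ j = D ^ i * mv l (σ i j) * (-D) ^ j := by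
      intro i hi j hj
      congr 2
      rw [hw i j (by simpa using hi) (by simpa using hj)]
      unfold rhs
      split_ifs <;> simp <;> abel
    have e3 : ∑ i ∈ range (p+1), ∑ j ∈ range (p+1), D ^ i * mv l (σ i j) * (-D) ^ j
        = (∑ n ∈ range (MS+1), mv l (t n) * D ^ n)
        - ∑ n ∈ range (MS+1), (-D) ^ n * mv l (t n)ᵀ := by
      have hsub : MS + 1 ≤ p + 1 := by omega
      have sgn : ∀ n : ℕ, (-D) ^ n = mv l ((-1:F)^n • 1) * D ^ n := fun n => by
        rw [neg_pow]
        rcases Nat.even_or_odd n with h | h <;> simp [h.neg_one_pow]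
      have sgn' : ∀ n : ℕ, (-D) ^ n = D ^ n * mv l ((-1:F)^n • 1) := fun n => by
        rw [neg_pow]
        rcases Nat.even_or_odd n with h | h <;> simp [h.neg_one_pow]
      simp only [σ, map_sub, mul_sub, sub_mul, Finset.sum_sub_distrib]
      congr 1
      · rw [Finset.sum_eq_single 0 (by intro i _ hi; simp [hi]) (by simp),
          ← pad (M := MS+1) (fun n hn => by simp [τ, show ¬ n ≤ MS by omega]) hsub]
        refine Finset.sum_congr rfl fun n hn => ?_
        have hn' := Finset.mem_range.1 hn
        rw [sgn n, ← mul_assoc]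
        simp only [τ, hn', if_true, pow_zero, one_mul]
        rw [← map_mul]
        congr 2
        rcases Nat.even_or_odd n with h | h <;> simp [h.neg_one_pow]
      · rw [Finset.sum_comm, Finset.sum_eq_single 0 (by intro i _ hi; simp [hi]) (by simp),
          ← pad (M := MS+1) (fun n hn => by simp [τ, show ¬ n ≤ MS by omega]) hsub]
        refine Finset.sum_congr rfl fun n hn => ?_
        have hn' := Finset.mem_range.1 hn
        rw [sgn' n, mul_assoc _ _ (mv l (t n)ᵀ)]
        simp only [τ, hn', if_true, pow_zero, mul_one]
        rw [← map_mul]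
        congr 2
        rcases Nat.even_or_odd n with h | h <;> simp [h.neg_one_pow]
    rw [← e3, ← Finset.sum_congr rfl (fun i hi => Finset.sum_congr rfl (e2 i hi)), hkey]
    simp only [mul_assoc, neg_mul, sub_neg_eq_add]

end C
end S8

/-- Let `F` be a linearly closed differential field of characteristic zero and let `K` be
an `ℓ×ℓ` matrix differential operator of order `N` with invertible leading coefficient
`K_N = (K_{ij,N})`.  Then for every skewadjoint `ℓ×ℓ` matrix differential operator `S`
(`S* = −S`) there exists an `ℓ×ℓ` matrix differential operator `P` such that
`K(P(u)) − P*(K*(u)) = S(u)` for all `u ∈ F^ℓ`. -/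
theorem stmt_8 (F : Type*) [Field F] [CharZero F] (d : F → F) (hd : IsDerivation d)
    (hlc : LinearlyClosed d)
    (l N : ℕ) (K : Fin l → Fin l → ℕ → F)
    (hK : IsUnit (Matrix.of fun i j : Fin l => K i j N))
    (MS : ℕ) (s : Fin l → Fin l → ℕ → F)
    (hskew : ∀ u : Fin l → F, matOpAdj d MS s u = - matOp d MS s u) :
    ∃ (MP : ℕ) (P : Fin l → Fin l → ℕ → F), ∀ u : Fin l → F,
      matOp d N K (matOp d MP P u) - matOpAdj d MP P (matOpAdj d N K u)
        = matOp d MS s u := by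
  obtain ⟨b, hb⟩ := hK.exists_right_inv
  obtain ⟨P, Pg, hP, he⟩ := S8.mainE hd hlc N MS (S8.cm K)
    (fun n => (2:F)⁻¹ • S8.cm s n) b hb
  obtain ⟨MP, A, hA⟩ := hP.real
  refine ⟨MP, A, fun u => ?_⟩
  rw [S8.matOp_eq hd N K, S8.matOpAdj_eq hd N K, (hA _).1, (hA _).2]
  have h1 := LinearMap.congr_fun he u
  refine Eq.trans h1 ?_
  have e1 := S8.matOp_eq hd MS (fun i j n => (2:F)⁻¹ * s i j n) u
  have e2 := S8.matOpAdj_eq hd MS (fun i j n => (2:F)⁻¹ * s i j n) u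
  have c : (S8.cm fun i j n => (2:F)⁻¹ * s i j n) = fun n => (2:F)⁻¹ • S8.cm s n := rfl
  rw [c] at e1 e2
  rw [LinearMap.sub_apply, ← e1, ← e2]
  funext i
  have h2 := congrFun (hskew u) i
  have f1 : matOp d MS (fun i j n => (2:F)⁻¹ * s i j n) u i = (2:F)⁻¹ * matOp d MS s u i := by
    simp only [matOp, Finset.mul_sum, mul_assoc]
  have hdn : ∀ (n : ℕ) (x : F), d^[n] ((2:F)⁻¹ * x) = (2:F)⁻¹ * d^[n] x := by
    intro n x
    induction n with
    | zero => rfl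
    | succ n ih => rw [Function.iterate_succ_apply', ih, S8.half_d hd,
        Function.iterate_succ_apply']
  have f2 : matOpAdj d MS (fun i j n => (2:F)⁻¹ * s i j n) u i
      = (2:F)⁻¹ * matOpAdj d MS s u i := by
    simp only [matOpAdj, Finset.mul_sum, mul_assoc, hdn]
    refine Finset.sum_congr rfl fun j _ => Finset.sum_congr rfl fun n _ => ?_
    ring
  rw [Pi.sub_apply, f1, f2, h2, Pi.neg_apply]
  ring
end

section
/- Let F be a linearly closed differential field of characteristic zero with constants C = {c ∈ F : ∂c = 0}, and let K : F^ℓ → F^ℓ be an ℓ×ℓ matrix differential operator of order N with invertible leading coefficient K_N = (K_{ij,N})_{i,j} ∈ Mat_{ℓ×ℓ}(F). Then the set of coefficient families (P_{ij,n}) with 1 ≤ i,j ≤ ℓ and 0 ≤ n ≤ N−1 such that the matrix differential operator P(u)_i = Σ_{j,n} P_{ij,n} ∂^n u_j (of order at most N−1) makes K∘P selfadjoint, i.e., K(P(u)) = P*(K*(u)) for all u ∈ F^ℓ, is a C-vector subspace of F^{ℓ²N} of dimension binom(Nℓ, 2). -/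
set_option linter.all false

section basics
variable {F : Type*} [Field F] {d : F → F}

theorem IsDerivation.zero (hd : IsDerivation d) : d 0 = 0 := by
  have := hd.map_add 0 0
  simpa using this

theorem IsDerivation.one (hd : IsDerivation d) : d 1 = 0 := by
  have := hd.leibniz 1 1
  simpa using this

theorem IsDerivation.neg (hd : IsDerivation d) (a : F) : d (-a) = - d a := by
  have := hd.map_add a (-a)
  rw [add_neg_cancel, hd.zero] at this
  linear_combination -this

theorem IsDerivation.sub (hd : IsDerivation d) (a b : F) : d (a - b) = d a - d b := by
  rw [sub_eq_add_neg, hd.map_add, hd.neg, sub_eq_add_neg]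

theorem IsDerivation.sum (hd : IsDerivation d) {ι : Type*} (s : Finset ι) (f : ι → F) :
    d (∑ i ∈ s, f i) = ∑ i ∈ s, d (f i) :=
  map_sum (AddMonoidHom.mk' d hd.map_add) f s

theorem IsDerivation.iter_succ (n : ℕ) (a : F) : d^[n+1] a = d (d^[n] a) :=
  Function.iterate_succ_apply' d n a

theorem IsDerivation.iter_add (hd : IsDerivation d) (n : ℕ) (a b : F) :
    d^[n] (a + b) = d^[n] a + d^[n] b := by
  induction n with
  | zero => rfl
  | succ n ih => simp only [IsDerivation.iter_succ, ih, hd.map_add]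

theorem IsDerivation.iter_sum (hd : IsDerivation d) (n : ℕ) {ι : Type*} (s : Finset ι) (f : ι → F) :
    d^[n] (∑ i ∈ s, f i) = ∑ i ∈ s, d^[n] (f i) :=
  map_sum (AddMonoidHom.mk' (d^[n]) (hd.iter_add n)) f s

theorem IsDerivation.iter_zero (hd : IsDerivation d) (n : ℕ) : d^[n] (0:F) = 0 := by
  induction n with
  | zero => rfl
  | succ n ih => rw [IsDerivation.iter_succ, ih, hd.zero]

theorem IsDerivation.const_mul (hd : IsDerivation d) {c : F} (hc : d c = 0) (a : F) :
    d (c * a) = c * d a := by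
  rw [hd.leibniz, hc]; ring

theorem IsDerivation.iter_const_mul (hd : IsDerivation d) {c : F} (hc : d c = 0) (n : ℕ) (a : F) :
    d^[n] (c * a) = c * d^[n] a := by
  induction n with
  | zero => rfl
  | succ n ih => rw [IsDerivation.iter_succ, ih, hd.const_mul hc, IsDerivation.iter_succ]

theorem IsDerivation.neg_one_pow (hd : IsDerivation d) (n : ℕ) : d ((-1)^n) = 0 := by
  rcases neg_one_pow_eq_or F n with h | h <;> rw [h]
  · exact hd.one
  · rw [hd.neg, hd.one, neg_zero]

/-- `φ` is a scalar differential operator of order `≤ k` with `k`-th coefficient `a`. -/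
def OpLead (d : F → F) (k : ℕ) (a : F) (φ : F → F) : Prop :=
  ∃ c : ℕ → F, ∀ u, φ u = a * d^[k] u + ∑ n ∈ Finset.range k, c n * d^[n] u

theorem OpLead.zero (k : ℕ) : OpLead d k 0 (fun _ => 0) := ⟨0, fun u => by simp⟩

theorem OpLead.base (a : F) : OpLead d 0 a (fun u => a * u) := ⟨0, fun u => by simp⟩

theorem OpLead.deriv (hd : IsDerivation d) {k : ℕ} {a : F} {φ : F → F} (h : OpLead d k a φ) :
    OpLead d (k+1) a (fun u => d (φ u)) := by
  obtain ⟨c, hc⟩ := h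
  refine ⟨fun n => (if n < k then d (c n) else d a) + (if n = 0 then 0 else c (n-1)), fun u => ?_⟩
  simp only [hc, hd.map_add, hd.leibniz, hd.sum, add_mul, Finset.sum_add_distrib]
  rw [Finset.sum_range_succ, Finset.sum_range_succ' (fun n => (if n = 0 then 0 else c (n-1)) * d^[n] u)]
  have hs : ∑ n ∈ Finset.range k, (if n < k then d (c n) else d a) * d^[n] u
      = ∑ n ∈ Finset.range k, d (c n) * d^[n] u :=
    Finset.sum_congr rfl (fun n hn => by rw [if_pos (Finset.mem_range.1 hn)])
  rw [hs]
  simp only [IsDerivation.iter_succ, lt_irrefl, if_false, if_true, Nat.add_sub_cancel, Nat.succ_ne_zero,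
    Nat.add_eq_zero_iff, one_ne_zero, and_false, zero_mul, add_zero]
  ring

theorem OpLead.up {k : ℕ} {a : F} {φ : F → F} (h : OpLead d k a φ) :
    OpLead d (k+1) 0 φ := by
  obtain ⟨c, hc⟩ := h
  refine ⟨fun n => (if n < k then c n else a), fun u => ?_⟩
  rw [Finset.sum_range_succ, hc]
  have hs : ∑ n ∈ Finset.range k, (if n < k then c n else a) * d^[n] u
      = ∑ n ∈ Finset.range k, c n * d^[n] u :=
    Finset.sum_congr rfl (fun n hn => by rw [if_pos (Finset.mem_range.1 hn)])
  rw [hs]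
  simp only [lt_irrefl, if_false]
  ring

theorem OpLead.up' {k m : ℕ} (hm : k < m) {a : F} {φ : F → F} (h : OpLead d k a φ) :
    OpLead d m 0 φ := by
  induction m, hm using Nat.le_induction with
  | base => exact h.up
  | succ m hm ih => exact ih.up

theorem OpLead.add {k : ℕ} {a b : F} {φ ψ : F → F} (h : OpLead d k a φ) (h' : OpLead d k b ψ) :
    OpLead d k (a + b) (fun u => φ u + ψ u) := by
  obtain ⟨c, hc⟩ := h
  obtain ⟨c', hc'⟩ := h'
  refine ⟨c + c', fun u => ?_⟩
  simp only [hc, hc', Pi.add_apply, add_mul, Finset.sum_add_distrib]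
  ring

theorem OpLead.mul {k : ℕ} {a : F} {φ : F → F} (h : OpLead d k a φ) (b : F) :
    OpLead d k (b * a) (fun u => b * φ u) := by
  obtain ⟨c, hc⟩ := h
  refine ⟨fun n => b * c n, fun u => ?_⟩
  simp only [hc, mul_add, Finset.mul_sum, mul_assoc]

theorem OpLead.sum {k : ℕ} {ι : Type*} (s : Finset ι) {a : ι → F} {φ : ι → F → F}
    (h : ∀ i ∈ s, OpLead d k (a i) (φ i)) :
    OpLead d k (∑ i ∈ s, a i) (fun u => ∑ i ∈ s, φ i u) := by
  classical
  induction s using Finset.induction_on with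
  | empty => simpa using OpLead.zero k
  | insert i s hi ih =>
    simp only [Finset.sum_insert hi]
    exact (h i (by simp)).add (ih fun j hj => h j (by simp [hj]))

theorem OpLead.surj (hlc : LinearlyClosed d) {k : ℕ} {a : F} {φ : F → F} (h : OpLead d k a φ)
    (ha : a ≠ 0) (b : F) : ∃ u, φ u = b := by
  obtain ⟨c, hc⟩ := h
  obtain ⟨u, hu⟩ := (hlc k (fun n => if n < k then c n else a) (by simpa using ha)).1 b
  refine ⟨u, ?_⟩
  rw [hc, ← hu, Finset.sum_range_succ, add_comm]
  congr 1
  · exact Finset.sum_congr rfl (fun n hn => by rw [if_pos (Finset.mem_range.1 hn)])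
  · simp

theorem OpLead.ker (hlc : LinearlyClosed d) {k : ℕ} {a : F} {φ : F → F} (h : OpLead d k a φ)
    (ha : a ≠ 0) (hk : 1 ≤ k) : ∃ u, u ≠ 0 ∧ φ u = 0 := by
  obtain ⟨c, hc⟩ := h
  obtain ⟨u, hu0, hu⟩ := (hlc k (fun n => if n < k then c n else a) (by simpa using ha)).2 hk
  refine ⟨u, hu0, ?_⟩
  rw [hc, ← hu, Finset.sum_range_succ, add_comm]
  congr 1
  · exact Finset.sum_congr rfl (fun n hn => by rw [if_pos (Finset.mem_range.1 hn)])
  · simp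

theorem OpLead.eq_zero (hlc : LinearlyClosed d) {k : ℕ} {a : F} {φ : F → F} (h : OpLead d k a φ)
    (h0 : ∀ u, φ u = 0) : a = 0 := by
  by_contra ha
  obtain ⟨u, hu⟩ := h.surj hlc ha 1
  rw [h0] at hu
  exact zero_ne_one hu

theorem LinearlyClosed.surj (hlc : LinearlyClosed d) (b : F) : ∃ u, d u = b := by
  obtain ⟨u, hu⟩ := (hlc 1 (fun n => if n = 1 then 1 else 0) (by simp)).1 b
  refine ⟨u, ?_⟩
  simpa [Finset.sum_range_succ] using hu

/-- explicit descending recursion -/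
def Trec (d : F → F) (N : ℕ) (b : ℕ → F) (n : ℕ) : F :=
  ∑ k ∈ Finset.range (N + 1 - n), (-1)^k * d^[k] (b (n+k))

theorem Trec_top (N : ℕ) (b : ℕ → F) : Trec d N b N = b N := by
  simp [Trec]

theorem Trec_step (hd : IsDerivation d) (N : ℕ) (b : ℕ → F) (n : ℕ) (hn : n < N) :
    Trec d N b n = b n - d (Trec d N b (n+1)) := by
  unfold Trec
  rw [show N + 1 - n = (N - n) + 1 by omega, show N + 1 - (n+1) = N - n by omega,
    Finset.sum_range_succ', hd.sum]
  simp only [hd.const_mul (hd.neg_one_pow _), ← IsDerivation.iter_succ]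
  rw [sub_eq_add_neg, ← Finset.sum_neg_distrib, add_comm]
  congr 1
  · simp
  · refine Finset.sum_congr rfl fun k _ => ?_
    rw [pow_succ, show n + (k+1) = n + 1 + k by ring]; ring

theorem Trec_unique (hd : IsDerivation d) (N : ℕ) (b T : ℕ → F) (hN : T N = b N)
    (h : ∀ n < N, T n = b n - d (T (n+1))) (n : ℕ) (hn : n ≤ N) : T n = Trec d N b n := by
  induction hn using Nat.decreasingInduction with
  | self => rw [hN, Trec_top]
  | of_succ k hk ih => rw [h k hk, Trec_step hd N b k hk, ih]

theorem Trec_zero (N : ℕ) (b : ℕ → F) :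
    Trec d N b 0 = ∑ k ∈ Finset.range (N+1), (-1)^k * d^[k] (b k) := by
  simp [Trec]

end basics

section horiz
variable {F : Type*} [Field F] {d : F → F}

theorem exists_horizontal_mod (hd : IsDerivation d) (hlc : LinearlyClosed d)
    {V : Type*} [AddCommGroup V] [Module F V] [FiniteDimensional F V]
    (D : V →+ V) (hD : ∀ (a : F) (x : V), D (a • x) = d a • x + a • D x)
    (H : Submodule F V) (hH : ∀ x ∈ H, D x ∈ H) (hne : H ≠ ⊤) :
    ∃ y, y ∉ H ∧ D y ∈ H := by
  classical
  obtain ⟨x, hx⟩ : ∃ x, x ∉ H := by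
    by_contra hcon
    push Not at hcon
    exact hne (eq_top_iff.2 fun x _ => hcon x)
  let e : ℕ → V := fun n => D^[n] x
  have he : ∀ n, D (e n) = e (n+1) := fun n => (Function.iterate_succ_apply' D n x).symm
  let W : ℕ → Submodule F V := fun k => H ⊔ Submodule.span F (e '' {i | i < k})
  have hWm : Monotone W := by
    intro a b hab
    refine sup_le_sup le_rfl (Submodule.span_mono (Set.image_mono ?_))
    intro i hi
    exact lt_of_lt_of_le hi hab
  have hex : ∃ k, e k ∈ W k := by
    obtain ⟨n, hn⟩ := WellFoundedGT.monotone_chain_condition (⟨W, hWm⟩ : ℕ →o Submodule F V)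
    refine ⟨n, ?_⟩
    have := hn (n+1) (by omega)
    change W n = W (n+1) at this
    rw [this]
    exact Submodule.mem_sup_right (Submodule.subset_span ⟨n, by simp, rfl⟩)
  have hk := Nat.find_spec hex
  have hmin := fun m (hm : m < Nat.find hex) => Nat.find_min hex hm
  generalize Nat.find hex = k at hk hmin
  rcases k with _ | k
  · exfalso
    apply hx
    simpa [W, e] using hk
  -- e (k+1) = h + ∑ a_n e_n
  have hmem : ∀ m, ∀ z ∈ W m, ∃ a : ℕ → F, z - ∑ n ∈ Finset.range m, a n • e n ∈ H := by
    intro m z hz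
    obtain ⟨h, hh, s, hs, rfl⟩ := Submodule.mem_sup.1 hz
    have : Set.image e {i | i < m} = (fun i => e i) '' ((Finset.range m : Finset ℕ) : Set ℕ) := by
      congr 1
      ext i; simp
    rw [this, Submodule.mem_span_image_finset_iff_exists_fun] at hs
    obtain ⟨c, hc⟩ := hs
    refine ⟨fun n => if hn : n ∈ Finset.range m then c ⟨n, hn⟩ else 0, ?_⟩
    have h2 : ∑ n ∈ Finset.range m, (if hn : n ∈ Finset.range m then c ⟨n, hn⟩ else 0) • e n = s := by
      rw [← hc, ← Finset.sum_coe_sort]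
      refine Finset.sum_congr rfl fun n _ => ?_
      rw [dif_pos n.2]
    rw [h2]
    simpa using hh
  obtain ⟨a, ha⟩ := hmem _ _ hk
  -- recursion
  let b : F → ℕ → F := fun g n => if n = k + 1 then g else - (a n * g)
  have hop : ∀ n ≤ k + 1, OpLead d (k + 1 - n) ((-1)^(k+1-n)) (fun g => Trec d (k+1) (b g) n) := by
    intro n hn
    induction hn using Nat.decreasingInduction with
    | self =>
      simp only [Trec_top, b]
      simpa using OpLead.base (d := d) (1:F)
    | of_succ n hn ih =>
      have h1 : OpLead d (k + 1 - n) 0 (fun g => b g n) := by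
        refine OpLead.up' (k := 0) (a := - a n) (by omega) ?_
        simp only [b, if_neg (show n ≠ k + 1 by omega)]
        simpa using OpLead.base (d := d) (- a n)
      have h2 := (ih.deriv hd).mul (-1)
      rw [show k + 1 - (n+1) + 1 = k + 1 - n by omega] at h2
      have h3 := h1.add h2
      convert h3 using 1
      · rw [show k + 1 - n = k + 1 - (n+1) + 1 by omega, pow_succ]; ring
      · ext g
        rw [Trec_step hd _ _ _ hn]; ring
  obtain ⟨g, hg0, hg⟩ := (hop 0 (by omega)).ker hlc (by simp) (by omega)
  let f : ℕ → F := fun n => Trec d (k+1) (b g) n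
  have hfk : f (k+1) = g := by simp [f, Trec_top, b]
  have hf0 : f 0 = 0 := hg
  have hf : ∀ n < k + 1, d (f (n+1)) = - (a n * g) - f n := by
    intro n hn
    have := Trec_step hd (k+1) (b g) n hn
    simp only [b, if_neg (show n ≠ k + 1 by omega)] at this
    change f n = _ - d (f (n+1)) at this
    rw [this]; ring
  refine ⟨∑ n ∈ Finset.range (k+1), f (n+1) • e n, ?_, ?_⟩
  · intro hy
    rw [Finset.sum_range_succ, hfk] at hy
    apply hmin k (by omega)
    have h1 : g • e k ∈ W k := by
      have h2 : ∑ n ∈ Finset.range k, f (n+1) • e n ∈ W k := by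
        refine Submodule.sum_mem _ fun n hn => Submodule.smul_mem _ _ ?_
        exact Submodule.mem_sup_right (Submodule.subset_span ⟨n, by simpa using hn, rfl⟩)
      have h3 := (W k).sub_mem (Submodule.mem_sup_left hy) h2
      simpa using h3
    exact (Submodule.smul_mem_iff _ hg0).1 h1
  · have : D (∑ n ∈ Finset.range (k+1), f (n+1) • e n) =
      g • (e (k+1) - ∑ n ∈ Finset.range (k+1), a n • e n) := by
      rw [map_sum]
      simp only [hD, he, Finset.sum_add_distrib]
      rw [Finset.sum_congr rfl (g := fun n => (- (a n * g) - f n) • e n)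
        (fun n hn => by rw [hf n (Finset.mem_range.1 hn)])]
      simp only [sub_smul, Finset.sum_sub_distrib, neg_smul, Finset.sum_neg_distrib, smul_sub,
        Finset.smul_sum, smul_smul]
      rw [Finset.sum_range_succ (fun n => f (n+1) • e (n+1)), hfk,
        Finset.sum_range_succ' (fun n => f n • e n), hf0]
      simp only [mul_comm g]
      simp
      abel
    rw [this]
    exact H.smul_mem _ ha

theorem horizontal_span (hd : IsDerivation d) (hlc : LinearlyClosed d)
    {V : Type*} [AddCommGroup V] [Module F V] [FiniteDimensional F V]
    (D : V →+ V) (hD : ∀ (a : F) (x : V), D (a • x) = d a • x + a • D x) :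
    Submodule.span F {y | D y = 0} = ⊤ := by
  by_contra hne
  set H := Submodule.span F {y | D y = 0} with hHdef
  have key : ∀ x ∈ H, ∀ a : F, D (a • x) ∈ H ∧ ∃ z ∈ H, D z = a • x := by
    intro x hx
    induction hx using Submodule.span_induction with
    | mem x hx =>
      intro a
      have hx' : D x = 0 := hx
      refine ⟨by rw [hD, hx', smul_zero, add_zero]; exact H.smul_mem _ (Submodule.subset_span hx), ?_⟩
      obtain ⟨t, ht⟩ := hlc.surj a
      refine ⟨t • x, H.smul_mem _ (Submodule.subset_span hx), ?_⟩
      rw [hD, ht, hx']; simp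
    | zero => exact fun a => ⟨by simp, 0, H.zero_mem, by simp⟩
    | add x y _ _ h1 h2 =>
      intro a
      obtain ⟨h1, z1, hz1, e1⟩ := h1 a
      obtain ⟨h2, z2, hz2, e2⟩ := h2 a
      exact ⟨by rw [smul_add, map_add]; exact H.add_mem h1 h2, z1 + z2, H.add_mem hz1 hz2,
        by rw [map_add, e1, e2, smul_add]⟩
    | smul b x hx h1 =>
      intro a
      rw [smul_smul]
      exact h1 (a * b)
  obtain ⟨y, hy, hDy⟩ := exists_horizontal_mod hd hlc D hD H (fun x hx => by simpa using (key x hx 1).1) hne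
  obtain ⟨z, hz, hzy⟩ := (key _ hDy 1).2
  rw [one_smul] at hzy
  apply hy
  have : y - z ∈ H := Submodule.subset_span (by simp [hzy])
  simpa using H.add_mem this hz

end horiz

section dual
variable {F : Type*} [Field F] {d : F → F}

theorem exists_fundamental (hd : IsDerivation d) (hlc : LinearlyClosed d)
    {ι : Type*} [Fintype ι] [DecidableEq ι] (A : Matrix ι ι F) :
    ∃ Y Z : Matrix ι ι F, Y * Z = 1 ∧ Z * Y = 1 ∧ Y.map d = A * Y := by
  let D : (ι → F) →+ (ι → F) := AddMonoidHom.mk' (fun y => (fun i => d (y i)) - A.mulVec y) (by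
    intro x y
    ext i
    simp [hd.map_add, Matrix.mulVec_add]
    ring)
  have hDdef : ∀ y, D y = (fun i => d (y i)) - A.mulVec y := fun y => rfl
  have hD : ∀ (a : F) (x : ι → F), D (a • x) = d a • x + a • D x := by
    intro a x
    ext i
    simp [hDdef, hd.leibniz, Matrix.mulVec_smul]
    ring
  have hsp := horizontal_span hd hlc D hD
  obtain ⟨s, hs, hspan, hli⟩ := exists_linearIndependent F {y | D y = 0}
  rw [hsp] at hspan
  let b : Module.Basis s F (ι → F) := Module.Basis.mk hli (by rw [Subtype.range_coe]; exact hspan.ge)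
  let b' : Module.Basis ι F (ι → F) := b.reindex (b.indexEquiv (Pi.basisFun F ι))
  have hb' : ∀ i, D (b' i) = 0 := by
    intro i
    have : b' i = ((b.indexEquiv (Pi.basisFun F ι)).symm i : ι → F) := by
      simp [b', b]
    rw [this]
    exact hs (Subtype.prop _)
  refine ⟨(Pi.basisFun F ι).toMatrix b', b'.toMatrix (Pi.basisFun F ι),
    Module.Basis.toMatrix_mul_toMatrix_flip _ _, Module.Basis.toMatrix_mul_toMatrix_flip _ _, ?_⟩
  ext i j
  have := congrFun (hb' j) i
  rw [hDdef] at this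
  simp [sub_eq_zero] at this
  simp [Module.Basis.toMatrix_apply, Matrix.mul_apply, this, Matrix.mulVec, dotProduct]

/-- Data attached to a matrix differential operator of order `M+1`. -/
structure Dual (d : F → F) (M l : ℕ) (K : Fin l → Fin l → ℕ → F) (L : Matrix (Fin l) (Fin l) F)
    (v w : Fin (M+1) × Fin l → Fin l → F) (T : Fin (M+1) × Fin l → ℕ → Fin l → F) : Prop where
  KL : (Matrix.of fun i j : Fin l => K i j (M+1)) * L = 1
  Kv : ∀ α, matOp d (M+1) K (v α) = 0
  YZ : (Matrix.of fun (x α : Fin (M+1) × Fin l) => d^[(x.1:ℕ)] (v α x.2)) *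
    (Matrix.of fun (α x : Fin (M+1) × Fin l) => T α (x.1+1) x.2) = 1
  Ttop : ∀ α j, T α (M+1) j = ∑ i, w α i * K i j (M+1)
  Tstep : ∀ α j, ∀ n < M+1, T α n j = ∑ i, w α i * K i j n - d (T α (n+1) j)
  Tzero : ∀ α j, T α 0 j = 0

/-- companion matrix -/
noncomputable def compA (M l : ℕ) (B : ℕ → Matrix (Fin l) (Fin l) F) :
    Matrix (Fin (M+1) × Fin l) (Fin (M+1) × Fin l) F :=
  Matrix.of fun x y => (if (x.1:ℕ)+1 = y.1 then (if x.2 = y.2 then 1 else 0) else 0)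
    - (if x.1 = Fin.last M then B y.1 x.2 y.2 else 0)

theorem compA_mul_lt {M l : ℕ} (B : ℕ → Matrix (Fin l) (Fin l) F) (y : Fin (M+1) × Fin l → F)
    (n : ℕ) (hn : n < M) (i : Fin l) :
    ∑ x, compA M l B (⟨n, by omega⟩, i) x * y x = y (⟨n+1, by omega⟩, i) := by
  rw [Finset.sum_eq_single (⟨n+1, by omega⟩, i)]
  · have : (⟨n, by omega⟩ : Fin (M+1)) ≠ Fin.last M := by
      intro h; have := congrArg Fin.val h; simp at this; omega
    simp [compA, this]
  · rintro ⟨m, j⟩ _ hne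
    have h1 : (⟨n, by omega⟩ : Fin (M+1)) ≠ Fin.last M := by
      intro h; have := congrArg Fin.val h; simp at this; omega
    simp only [compA, Matrix.of_apply, h1, if_false, sub_zero]
    split_ifs with h2 h3
    · exact absurd (by ext <;> simp [h2, h3]) hne
    · simp
    · simp
  · simp

theorem compA_mul_last {M l : ℕ} (B : ℕ → Matrix (Fin l) (Fin l) F) (y : Fin (M+1) × Fin l → F)
    (i : Fin l) :
    ∑ x, compA M l B (Fin.last M, i) x * y x = - ∑ x : Fin (M+1) × Fin l, B x.1 i x.2 * y x := by
  rw [← Finset.sum_neg_distrib]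
  refine Finset.sum_congr rfl fun x _ => ?_
  have : M + 1 ≠ (x.1:ℕ) := by have := x.1.2; omega
  simp [compA, this]

theorem mul_compA_last_part {M l : ℕ} (B : ℕ → Matrix (Fin l) (Fin l) F) (z : Fin (M+1) × Fin l → F)
    (n : Fin (M+1)) (j : Fin l) :
    ∑ x : Fin (M+1) × Fin l, z x * (if x.1 = Fin.last M then B n x.2 j else 0)
      = ∑ i, z (Fin.last M, i) * B n i j := by
  rw [Fintype.sum_prod_type, Finset.sum_eq_single (Fin.last M)]
  · simp
  · intro b _ hb; simp [hb]
  · simp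

theorem mul_compA {M l : ℕ} (B : ℕ → Matrix (Fin l) (Fin l) F) (T : ℕ → Fin l → F) (hT : T 0 = 0)
    (n : Fin (M+1)) (j : Fin l) :
    ∑ x : Fin (M+1) × Fin l, T (x.1+1) x.2 * compA M l B x (n, j)
      = T n j - ∑ i, T (M+1) i * B n i j := by
  simp only [compA, Matrix.of_apply, mul_sub, Finset.sum_sub_distrib]
  rw [mul_compA_last_part B (fun x => T (x.1+1) x.2)]
  congr 1
  obtain ⟨n, hn⟩ := n
  rcases n with _ | n
  · simp [hT]
  · rw [Finset.sum_eq_single (⟨n, by omega⟩, j)]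
    · simp
    · rintro ⟨m, i⟩ _ hne
      simp only
      split_ifs with h2 h3
      · exact absurd (by ext <;> simp <;> first | omega | simp [h3]) hne
      · simp
      · simp
    · simp

theorem exists_dual (hd : IsDerivation d) (hlc : LinearlyClosed d) (M l : ℕ)
    (K : Fin l → Fin l → ℕ → F)
    (hK : IsUnit (Matrix.of fun i j : Fin l => K i j (M+1))) :
    ∃ L v w T, Dual d M l K L v w T := by
  obtain ⟨L, hKL⟩ := hK.exists_right_inv
  have hLK : L * (Matrix.of fun i j : Fin l => K i j (M+1)) = 1 := mul_eq_one_comm.1 hKL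
  let B : ℕ → Matrix (Fin l) (Fin l) F := fun n => L * (Matrix.of fun i j => K i j n)
  obtain ⟨Y, Z, hYZ, hZY, hY⟩ := exists_fundamental hd hlc (compA M l B)
  have hYe : ∀ x α, d (Y x α) = ∑ y, compA M l B x y * Y y α := by
    intro x α
    have := congrFun (congrFun hY x) α
    simpa [Matrix.mul_apply] using this
  have hYv : ∀ α i, ∀ n (hn : n < M+1), Y (⟨n, hn⟩, i) α = d^[n] (Y (0, i) α) := by
    intro α i n
    induction n with
    | zero => intro _; rfl
    | succ n ih =>
      intro hn
      rw [IsDerivation.iter_succ, ← ih (by omega), hYe, compA_mul_lt B (fun y => Y y α) n (by omega)]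
  let T : Fin (M+1) × Fin l → ℕ → Fin l → F := fun α n j =>
    match n with
    | 0 => 0
    | n+1 => if h : n < M+1 then Z α (⟨n, h⟩, j) else 0
  have hTZ : ∀ α x, T α (x.1+1) x.2 = Z α x := by
    intro α x
    simp [T]
    intro h
    have := x.1.2
    omega
  have hZd : ∀ α y, d (Z α y) = - ∑ x, Z α x * compA M l B x y := by
    intro α y
    have h1 : Z.map d * Y + Z * Y.map d = 0 := by
      ext a b
      have := congrArg d (congrFun (congrFun hZY a) b)
      rw [Matrix.mul_apply, hd.sum] at this
      simp only [hd.leibniz, Finset.sum_add_distrib] at this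
      simp only [Matrix.add_apply, Matrix.mul_apply, Matrix.map_apply, Matrix.zero_apply, this]
      rw [Matrix.one_apply]
      split_ifs
      · exact hd.one
      · exact hd.zero
    have h2 : Z.map d = - (Z * compA M l B) := by
      have : (Z.map d * Y + Z * Y.map d) * Z = 0 := by rw [h1, zero_mul]
      rw [add_mul, mul_assoc, hYZ, mul_one, hY, mul_assoc, mul_assoc, hYZ, mul_one] at this
      exact eq_neg_of_add_eq_zero_left this
    have := congrFun (congrFun h2 α) y
    simpa [Matrix.mul_apply] using this
  let w : Fin (M+1) × Fin l → Fin l → F := fun α i => ∑ k, T α (M+1) k * L k i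
  have hwK : ∀ α j n, ∑ i, w α i * K i j n = ∑ i, T α (M+1) i * B n i j := by
    intro α j n
    simp only [w, B, Matrix.mul_apply, Matrix.of_apply, Finset.sum_mul, Finset.mul_sum, mul_assoc]
    exact Finset.sum_comm
  refine ⟨L, fun α i => Y (0, i) α, w, T, ⟨hKL, ?_, ?_, ?_, ?_, ?_⟩⟩
  · intro α
    have h1 : ∀ i, d^[M+1] (Y (0,i) α) = - ∑ j, ∑ n ∈ Finset.range (M+1), B n i j * d^[n] (Y (0,j) α) := by
      intro i
      rw [IsDerivation.iter_succ, ← hYv α i M (by omega), hYe]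
      have := compA_mul_last B (fun y => Y y α) i
      rw [show (Fin.last M) = (⟨M, by omega⟩ : Fin (M+1)) from rfl] at this
      rw [this, Fintype.sum_prod_type, Finset.sum_comm]
      congr 1
      refine Finset.sum_congr rfl fun j _ => ?_
      rw [Finset.sum_range]
      refine Finset.sum_congr rfl fun n _ => ?_
      simp only
      rw [← hYv α j n n.2]
    ext i
    simp only [matOp, Pi.zero_apply, Finset.sum_range_succ _ (M+1), Finset.sum_add_distrib]
    simp only [h1]
    have h2 : ∑ x, K i x (M+1) * -∑ j, ∑ n ∈ Finset.range (M+1), B n x j * d^[n] (Y (0,j) α)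
        = - ∑ j, ∑ n ∈ Finset.range (M+1), (∑ x, K i x (M+1) * B n x j) * d^[n] (Y (0,j) α) := by
      simp only [mul_neg, Finset.sum_neg_distrib, Finset.mul_sum, Finset.sum_mul, mul_assoc]
      congr 1
      rw [Finset.sum_comm]
      refine Finset.sum_congr rfl fun j _ => ?_
      rw [Finset.sum_comm]
    have h3 : ∀ n j, ∑ x, K i x (M+1) * B n x j = K i j n := by
      intro n j
      have : (Matrix.of fun i j : Fin l => K i j (M+1)) * B n = Matrix.of fun i j => K i j n := by
        simp only [B]
        rw [← mul_assoc, hKL, one_mul]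
      have := congrFun (congrFun this i) j
      simpa [Matrix.mul_apply] using this
    rw [h2]
    simp only [h3]
    ring
  · rw [← hYZ]
    congr 1
    · ext x α
      simp only [Matrix.of_apply]
      rw [← hYv α x.2 x.1 x.1.2]
    · ext α x
      simp only [Matrix.of_apply, hTZ]
  · intro α j
    rw [hwK]
    simp [B, hLK, Matrix.one_apply]
  · intro α j n hn
    rw [hwK]
    have h1 := mul_compA B (T α) rfl ⟨n, hn⟩ j
    have h2 := hZd α (⟨n, hn⟩, j)
    rw [← hTZ α (⟨n, hn⟩, j)] at h2
    simp only [← hTZ] at h2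
    rw [h1] at h2
    simp only at h2
    rw [h2]
    ring
  · intro α j; rfl

end dual

section core
variable {F : Type*} [Field F] {d : F → F}

theorem jets (hd : IsDerivation d) {ι : Type*} [Fintype ι] (x y : ι → F) (m : ℕ)
    (h : ∀ n < m, ∑ α, d^[n] (x α) * d (y α) = 0) (n : ℕ) (hn : n ≤ m) :
    d^[n] (∑ α, x α * y α) = ∑ α, d^[n] (x α) * y α := by
  induction n with
  | zero => rfl
  | succ n ih =>
    rw [IsDerivation.iter_succ, ih (by omega), hd.sum]
    simp only [hd.leibniz, Finset.sum_add_distrib]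
    rw [h n (by omega), add_zero]
    simp only [IsDerivation.iter_succ]

theorem conc (hd : IsDerivation d) (q : ℕ) (a : F) :
    ∃ e : ℕ → F, ∀ w : F, a * d^[q] w = (-1)^q * d^[q] a * w
      + d (∑ i ∈ Finset.range q, e i * d^[i] w) := by
  induction q generalizing a with
  | zero => exact ⟨0, fun w => by simp [hd.zero]⟩
  | succ q ih =>
    obtain ⟨e, he⟩ := ih (d a)
    refine ⟨fun i => (if i = q then a else 0) - (if i < q then e i else 0), fun w => ?_⟩
    have hs : ∑ i ∈ Finset.range (q+1), ((if i = q then a else 0) - (if i < q then e i else 0)) * d^[i] w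
        = a * d^[q] w - ∑ i ∈ Finset.range q, e i * d^[i] w := by
      simp only [sub_mul, Finset.sum_sub_distrib]
      congr 1
      · rw [Finset.sum_eq_single q]
        · simp
        · intro i _ hi; simp [hi]
        · simp
      · rw [Finset.sum_range_succ]
        simp only [lt_irrefl, if_false, zero_mul, add_zero]
        exact Finset.sum_congr rfl (fun n hn => by rw [if_pos (Finset.mem_range.1 hn)])
    rw [hs, hd.sub, hd.leibniz]
    have := he w
    have e1 : d (d^[q] w) = d^[q+1] w := (IsDerivation.iter_succ q w).symm
    rw [pow_succ, e1, Function.iterate_succ_apply d q a]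
    linear_combination (-1 : F) * this

/-- the operator with coefficient family `p` -/
def Pop (d : F → F) {M l : ℕ} (p : Fin l → Fin l → Fin (M+1) → F) (u : Fin l → F) : Fin l → F :=
  fun j => ∑ r, ∑ q : Fin (M+1), p j r q * d^[(q : ℕ)] (u r)

/-- its adjoint -/
def Padj (d : F → F) {M l : ℕ} (p : Fin l → Fin l → Fin (M+1) → F) (f : Fin l → F) : Fin l → F :=
  fun i => ∑ j, ∑ q : Fin (M+1), (-1 : F) ^ (q : ℕ) * d^[(q : ℕ)] (p j i q * f j)

variable {M l : ℕ} {K : Fin l → Fin l → ℕ → F} {L : Matrix (Fin l) (Fin l) F}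
    {v w : Fin (M+1) × Fin l → Fin l → F} {T : Fin (M+1) × Fin l → ℕ → Fin l → F}

theorem Dual.yz (D : Dual d M l K L v w T) (n m : ℕ) (hn : n < M+1) (hm : m < M+1) (i j : Fin l) :
    ∑ α, d^[n] (v α i) * T α (m+1) j = if n = m ∧ i = j then 1 else 0 := by
  have := congrFun (congrFun D.YZ (⟨n, hn⟩, i)) (⟨m, hm⟩, j)
  simpa [Matrix.mul_apply, Matrix.one_apply] using this

theorem Dual.zy (D : Dual d M l K L v w T) (α β : Fin (M+1) × Fin l) :
    ∑ x : Fin (M+1) × Fin l, T α (x.1+1) x.2 * d^[(x.1:ℕ)] (v β x.2) = if α = β then 1 else 0 := by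
  have h := mul_eq_one_comm.1 D.YZ
  have := congrFun (congrFun h α) β
  simpa [Matrix.mul_apply, Matrix.one_apply] using this

theorem Dual.orth0 (D : Dual d M l K L v w T) (n : ℕ) (hn : n ≤ M) (i r : Fin l) :
    ∑ α, d^[n] (v α i) * w α r = if n = M then L i r else 0 := by
  have hw : ∀ α, w α r = ∑ j, T α (M+1) j * L j r := by
    intro α
    have h : (fun j => T α (M+1) j) = Matrix.vecMul (w α) (Matrix.of fun i j => K i j (M+1)) := by
      ext j; rw [D.Ttop]; simp [Matrix.vecMul, dotProduct]
    have h2 : Matrix.vecMul (fun j => T α (M+1) j) L = w α := by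
      rw [h, Matrix.vecMul_vecMul, D.KL, Matrix.vecMul_one]
    rw [← h2]
    simp [Matrix.vecMul, dotProduct]
  simp only [hw, Finset.mul_sum, ← mul_assoc]
  rw [Finset.sum_comm]
  simp only [← Finset.sum_mul]
  simp only [D.yz n M (by omega) (by omega)]
  by_cases h : n = M <;> simp [h]

theorem Dual.orth (hd : IsDerivation d) (D : Dual d M l K L v w T) (k n : ℕ) (hn : n + k ≤ M)
    (i r : Fin l) :
    ∑ α, d^[n] (v α i) * d^[k] (w α r) = if n + k = M then (-1)^k * L i r else 0 := by
  induction k generalizing n with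
  | zero => simpa using D.orth0 n (by omega) i r
  | succ k ih =>
    have h1 := congrArg d (ih n (by omega))
    rw [if_neg (by omega), hd.zero, hd.sum] at h1
    simp only [hd.leibniz, Finset.sum_add_distrib, ← IsDerivation.iter_succ] at h1
    rw [ih (n+1) (by omega)] at h1
    rw [eq_neg_of_add_eq_zero_right h1, show n + 1 + k = n + (k+1) by ring]
    split_ifs
    · rw [pow_succ]; ring
    · simp

theorem Dual.orth' (hd : IsDerivation d) (D : Dual d M l K L v w T) (k n : ℕ) (hn : n + k < M)
    (i r : Fin l) :
    ∑ α, d^[n] (v α i) * d^[k] (w α r) = 0 := by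
  rw [D.orth hd k n (by omega), if_neg (by omega)]

theorem Dual.L_inj (D : Dual d M l K L v w T) (x : Fin l → F) (h : ∀ i, ∑ r, L i r * x r = 0) : x = 0 := by
  have h1 : L.mulVec x = 0 := by ext i; simpa [Matrix.mulVec, dotProduct] using h i
  have h2 := congrArg (Matrix.mulVec (Matrix.of fun i j => K i j (M+1))) h1
  rwa [Matrix.mulVec_mulVec, D.KL, Matrix.one_mulVec, Matrix.mulVec_zero] at h2

theorem Dual.wr_unit (hd : IsDerivation d) (D : Dual d M l K L v w T) :
    IsUnit (Matrix.of fun (α x : Fin (M+1) × Fin l) => d^[(x.1:ℕ)] (w α x.2)) := by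
  rw [← Matrix.mulVec_injective_iff_isUnit]
  rw [← Matrix.coe_mulVecLin, injective_iff_map_eq_zero]
  intro x hx
  have hx' : ∀ α, ∑ k : Fin (M+1), ∑ r, d^[(k:ℕ)] (w α r) * x (k, r) = 0 := by
    intro α
    have := congrFun hx α
    simpa [Matrix.mulVec, dotProduct, Fintype.sum_prod_type] using this
  have key : ∀ n, ∀ (hn : n ≤ M), ∀ r, x (⟨M - n, by omega⟩, r) = 0 := by
    intro n
    induction n using Nat.strong_induction_on with
    | _ n ih =>
    intro hn
    have h0 : ∀ i, ∑ r, L i r * x (⟨M-n, by omega⟩, r) = 0 := by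
      intro i
      have h1 : ∑ k : Fin (M+1), ∑ r, (∑ α, d^[n] (v α i) * d^[(k:ℕ)] (w α r)) * x (k, r) = 0 := by
        have : ∑ α, d^[n] (v α i) * ∑ k : Fin (M+1), ∑ r, d^[(k:ℕ)] (w α r) * x (k, r) = 0 := by
          simp [hx']
        rw [← this]
        simp only [Finset.mul_sum, Finset.sum_mul, mul_assoc]
        rw [Finset.sum_comm' (t' := Finset.univ) (s' := fun _ => Finset.univ) (by simp)]
        conv_rhs => rw [Finset.sum_comm]; enter [2, k]; rw [Finset.sum_comm]
        rw [Finset.sum_comm]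
      rw [Finset.sum_eq_single ⟨M-n, by omega⟩] at h1
      · have h2 : ∀ r, ∑ α, d^[n] (v α i) * d^[M-n] (w α r) = (-1)^(M-n) * L i r := by
          intro r
          rw [D.orth hd _ _ (by omega), if_pos (by omega)]
        simp only [h2, mul_assoc, ← Finset.mul_sum] at h1
        simpa using h1
      · rintro ⟨k, hk⟩ _ hne
        have hne' : k ≠ M - n := fun h => hne (by ext; exact h)
        refine Finset.sum_eq_zero fun r _ => ?_
        by_cases hlt : n + k < M
        · rw [D.orth' hd k n hlt, zero_mul]
        · have := ih (M - k) (by omega) (by omega) r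
          have e : (⟨M - (M-k), by omega⟩ : Fin (M+1)) = ⟨k, hk⟩ := by ext; simp; omega
          rw [e] at this
          rw [this, mul_zero]
      · simp
    have := D.L_inj _ h0
    exact fun r => congrFun this r
  ext ⟨k, r⟩
  have := key (M - k) (by omega) r
  have e : (⟨M - (M-k), by omega⟩ : Fin (M+1)) = k := by ext; simp; omega
  rw [e] at this
  simpa using this

/-- Lagrange identity -/
theorem lagrange (hd : IsDerivation d) (u x : Fin l → F) (T : ℕ → Fin l → F)
    (Ttop : ∀ j, T (M+1) j = ∑ i, u i * K i j (M+1))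
    (Tstep : ∀ j, ∀ n < M+1, T n j = ∑ i, u i * K i j n - d (T (n+1) j)) :
    d (∑ y : Fin (M+1) × Fin l, T (y.1+1) y.2 * d^[(y.1:ℕ)] (x y.2))
      = ∑ i, u i * matOp d (M+1) K x i - ∑ j, T 0 j * x j := by
  have h1 : ∀ j, ∀ m ≤ M + 1, d (∑ n ∈ Finset.range m, T (n+1) j * d^[n] (x j)) =
      ∑ n ∈ Finset.range m, (∑ i, u i * K i j n) * d^[n] (x j) + T m j * d^[m] (x j) - T 0 j * x j := by
    intro j m
    induction m with
    | zero => simp [hd.zero]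
    | succ m ih =>
      intro hm
      rw [Finset.sum_range_succ, hd.map_add, ih (by omega), Finset.sum_range_succ, hd.leibniz,
        Tstep j m (by omega), IsDerivation.iter_succ]
      ring
  have h2 : ∑ i, u i * matOp d (M+1) K x i =
      ∑ j, ∑ n ∈ Finset.range (M+1+1), (∑ i, u i * K i j n) * d^[n] (x j) := by
    simp only [matOp, Finset.mul_sum, Finset.sum_mul, mul_assoc]
    rw [Finset.sum_comm]
    refine Finset.sum_congr rfl fun j _ => ?_
    rw [Finset.sum_comm]
  rw [h2, Fintype.sum_prod_type, Finset.sum_comm, hd.sum, ← Finset.sum_sub_distrib]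
  refine Finset.sum_congr rfl fun j _ => ?_
  have := h1 j (M+1) le_rfl
  rw [Finset.sum_range] at this
  rw [this, Finset.sum_range_succ _ (M+1), Ttop]

theorem Dual.ker (hd : IsDerivation d) (D : Dual d M l K L v w T) (x : Fin l → F)
    (hx : matOp d (M+1) K x = 0) :
    ∃ c : Fin (M+1) × Fin l → F, (∀ α, d (c α) = 0) ∧ ∀ j, x j = ∑ α, c α * v α j := by
  refine ⟨fun α => ∑ y : Fin (M+1) × Fin l, T α (y.1+1) y.2 * d^[(y.1:ℕ)] (x y.2), ?_, ?_⟩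
  · intro α
    rw [lagrange (K := K) hd (w α) x (T α) (D.Ttop α) (D.Tstep α), hx]
    simp [D.Tzero]
  · intro j
    simp only [Finset.sum_mul]
    rw [Finset.sum_comm]
    have : ∀ y : Fin (M+1) × Fin l, ∑ α, T α (y.1+1) y.2 * d^[(y.1:ℕ)] (x y.2) * v α j
        = (if 0 = (y.1:ℕ) ∧ j = y.2 then 1 else 0) * d^[(y.1:ℕ)] (x y.2) := by
      intro y
      rw [← D.yz 0 y.1 (by omega) y.1.2 j y.2, Finset.sum_mul]
      refine Finset.sum_congr rfl fun α _ => ?_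
      simp only [Function.iterate_zero, id]
      ring
    simp only [this]
    rw [Finset.sum_eq_single (0, j)]
    · simp
    · rintro ⟨n, i⟩ _ hne
      simp only
      rw [if_neg, zero_mul]
      rintro ⟨h1, h2⟩
      exact hne (by ext <;> simp [← h1, h2])
    · simp

theorem adj_eq_of_rec (hd : IsDerivation d) (u : Fin l → F) (T : ℕ → Fin l → F)
    (Ttop : ∀ j, T (M+1) j = ∑ i, u i * K i j (M+1))
    (Tstep : ∀ j, ∀ n < M+1, T n j = ∑ i, u i * K i j n - d (T (n+1) j)) (j : Fin l) :
    matOpAdj d (M+1) K u j = T 0 j := by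
  have := Trec_unique hd (M+1) (fun n => ∑ i, u i * K i j n) (fun n => T n j) (Ttop j) (Tstep j) 0 (by omega)
  rw [this, Trec_zero, matOpAdj, Finset.sum_comm]
  refine Finset.sum_congr rfl fun n _ => ?_
  rw [hd.iter_sum, Finset.mul_sum]
  simp only [mul_comm (u _)]

theorem Dual.Kw (hd : IsDerivation d) (D : Dual d M l K L v w T) (α) :
    matOpAdj d (M+1) K (w α) = 0 := by
  ext j
  rw [adj_eq_of_rec hd (w α) (T α) (D.Ttop α) (D.Tstep α), D.Tzero]; rfl

theorem Dual.coords (hd : IsDerivation d) (D : Dual d M l K L v w T) (u : Fin l → F) :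
    ∃ h : Fin (M+1) × Fin l → F, (∀ α, d (h α) = - ∑ j, matOpAdj d (M+1) K u j * v α j) ∧
      ∀ r, u r = ∑ α, w α r * h α := by
  let U : ℕ → Fin l → F := fun n j => Trec d (M+1) (fun n => ∑ i, u i * K i j n) n
  have Utop : ∀ j, U (M+1) j = ∑ i, u i * K i j (M+1) := fun j => Trec_top _ _
  have Ustep : ∀ j, ∀ n < M+1, U n j = ∑ i, u i * K i j n - d (U (n+1) j) :=
    fun j n hn => Trec_step hd _ _ n hn
  refine ⟨fun α => ∑ y : Fin (M+1) × Fin l, U (y.1+1) y.2 * d^[(y.1:ℕ)] (v α y.2), ?_, ?_⟩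
  · intro α
    rw [lagrange (K := K) hd u (v α) U Utop Ustep, D.Kv]
    simp [adj_eq_of_rec hd u U Utop Ustep]
  · intro r
    simp only [Finset.mul_sum]
    rw [Finset.sum_comm]
    have : ∀ y : Fin (M+1) × Fin l, ∑ α, w α r * (U (y.1+1) y.2 * d^[(y.1:ℕ)] (v α y.2))
        = U (y.1+1) y.2 * (if (y.1:ℕ) = M then L y.2 r else 0) := by
      intro y
      rw [← D.orth0 y.1 (by omega) y.2 r, Finset.mul_sum]
      refine Finset.sum_congr rfl fun α _ => ?_
      ring
    simp only [this]
    rw [Fintype.sum_prod_type, Finset.sum_eq_single (Fin.last M)]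
    · simp only [Fin.val_last, if_true, Utop]
      have h : Matrix.vecMul (Matrix.vecMul u (Matrix.of fun i j => K i j (M+1))) L = u := by
        rw [Matrix.vecMul_vecMul, D.KL, Matrix.vecMul_one]
      have h2 := congrFun h r
      simp only [Matrix.vecMul, dotProduct, Matrix.of_apply] at h2
      exact h2.symm
    · intro n _ hn
      have : (n:ℕ) ≠ M := fun h => hn (by ext; simpa using h)
      simp [this]
    · simp

theorem Dual.surj (hd : IsDerivation d) (hlc : LinearlyClosed d) (D : Dual d M l K L v w T)
    (f : Fin l → F) : ∃ u, matOpAdj d (M+1) K u = f := by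
  choose h hh using fun α => hlc.surj (- ∑ j, f j * v α j)
  let u : Fin l → F := fun r => ∑ α, w α r * h α
  let U : ℕ → Fin l → F := fun n j => if n = 0 then f j else ∑ α, h α * T α n j
  have hb : ∀ j n, ∑ i, u i * K i j n = ∑ α, h α * ∑ i, w α i * K i j n := by
    intro j n
    simp only [u, Finset.mul_sum, Finset.sum_mul]
    rw [Finset.sum_comm]
    refine Finset.sum_congr rfl fun α _ => Finset.sum_congr rfl fun i _ => ?_
    ring
  refine ⟨u, ?_⟩
  ext j
  rw [adj_eq_of_rec hd u U]
  · simp [U]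
  · intro j
    simp only [U, hb, D.Ttop]
    simp
  · intro j n hn
    have h1 : ∑ α, d (h α) * T α (n+1) j = - (if n = 0 then f j else 0) := by
      have h2 : ∀ α, d (h α) * T α (n+1) j = - ∑ i, f i * (v α i * T α (n+1) j) := by
        intro α
        rw [hh, neg_mul, Finset.sum_mul]
        simp only [mul_assoc]
      simp only [h2, Finset.sum_neg_distrib]
      rw [Finset.sum_comm]
      simp only [← Finset.mul_sum]
      have h3 := fun i => D.yz 0 n (by omega) hn i j
      simp only [Function.iterate_zero, id] at h3
      simp only [h3]
      by_cases hn0 : n = 0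
      · subst hn0; simp
      · simp [hn0, Ne.symm hn0]
    have h4 : d (U (n+1) j) = ∑ α, d (h α) * T α (n+1) j + ∑ α, h α * d (T α (n+1) j) := by
      simp only [U, Nat.succ_ne_zero, if_false, hd.sum, hd.leibniz, Finset.sum_add_distrib]
    rw [h4, h1, hb]
    have h5 : ∑ α, h α * T α n j = ∑ α, h α * ∑ i, w α i * K i j n - ∑ α, h α * d (T α (n+1) j) := by
      rw [← Finset.sum_sub_distrib]
      refine Finset.sum_congr rfl fun α _ => ?_
      rw [D.Tstep α j n hn]; ring
    by_cases hn0 : n = 0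
    · subst hn0
      simp only [D.Tzero, mul_zero, Finset.sum_const_zero] at h5
      simp only [U, if_true]
      linear_combination h5
    · simp only [U, if_neg hn0, h5]
      ring

end core

section fin
variable {F : Type*} [Field F] {d : F → F}
variable {M l : ℕ} {K : Fin l → Fin l → ℕ → F} {L : Matrix (Fin l) (Fin l) F}
    {v w : Fin (M+1) × Fin l → Fin l → F} {T : Fin (M+1) × Fin l → ℕ → Fin l → F}

theorem Dual.solve (hd : IsDerivation d) (D : Dual d M l K L v w T) (φ : Fin l → F)
    (g : Fin (M+1) × Fin l → F) (hg : ∀ α, d (g α) = ∑ r, w α r * φ r) :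
    matOp d (M+1) K (fun i => ∑ α, v α i * g α) = φ := by
  have h0 : ∀ i, ∀ n ≤ M, ∑ α, d^[n] (v α i) * d (g α) = ∑ r, (if n = M then L i r else 0) * φ r := by
    intro i n hn
    simp only [hg, Finset.mul_sum, ← mul_assoc]
    rw [Finset.sum_comm]
    simp only [← Finset.sum_mul, D.orth0 n hn]
  have h1 : ∀ i, ∀ n ≤ M, d^[n] (∑ α, v α i * g α) = ∑ α, d^[n] (v α i) * g α := by
    intro i n hn
    refine jets hd (fun α => v α i) g M ?_ n hn
    intro n hn
    rw [h0 i n hn.le]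
    simp [hn.ne]
  have h2 : ∀ i, d^[M+1] (∑ α, v α i * g α) = ∑ α, d^[M+1] (v α i) * g α + ∑ r, L i r * φ r := by
    intro i
    rw [IsDerivation.iter_succ, h1 i M le_rfl, hd.sum]
    simp only [hd.leibniz, Finset.sum_add_distrib]
    rw [h0 i M le_rfl]
    simp only [IsDerivation.iter_succ, if_true]
  ext i
  have h3 : matOp d (M+1) K (fun i => ∑ α, v α i * g α) i
      = ∑ α, matOp d (M+1) K (v α) i * g α + ∑ j, K i j (M+1) * ∑ r, L j r * φ r := by
    have h4 : ∀ j, ∑ n ∈ Finset.range (M+1+1), K i j n * d^[n] (∑ α, v α j * g α)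
        = ∑ α, (∑ n ∈ Finset.range (M+1+1), K i j n * d^[n] (v α j)) * g α
          + K i j (M+1) * ∑ r, L j r * φ r := by
      intro j
      simp only [Finset.sum_mul]
      rw [Finset.sum_comm (s := Finset.univ), Finset.sum_range_succ, Finset.sum_range_succ _ (M+1), h2,
        mul_add, ← add_assoc]
      congr 1
      congr 1
      · refine Finset.sum_congr rfl fun n hn => ?_
        rw [h1 j n (by have := Finset.mem_range.1 hn; omega), Finset.mul_sum]
        simp only [mul_assoc]
      · rw [Finset.mul_sum]
        simp only [mul_assoc]
    simp only [matOp, h4, Finset.sum_add_distrib]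
    congr 1
    rw [Finset.sum_comm]
    simp only [Finset.sum_mul]
  rw [h3]
  simp only [D.Kv, Pi.zero_apply, zero_mul, Finset.sum_const_zero, zero_add]
  have h5 := congrFun (congrArg (fun A => Matrix.mulVec A φ) D.KL) i
  simp only [← Matrix.mulVec_mulVec, Matrix.one_mulVec] at h5
  simpa [Matrix.mulVec, dotProduct] using h5

theorem Dual.solve' (hd : IsDerivation d) (D : Dual d M l K L v w T)
    (p : Fin l → Fin l → Fin (M+1) → F) (f : Fin l → F)
    (g : Fin (M+1) × Fin l → F) (hg : ∀ α, d (g α) = ∑ j, Pop d p (w α) j * f j) :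
    matOp d (M+1) K (fun i => ∑ α, v α i * g α) = Padj d p f := by
  choose e he using fun (j r : Fin l) (q : Fin (M+1)) => conc hd (q:ℕ) (p j r q * f j)
  let G : Fin (M+1) × Fin l → F := fun α =>
    ∑ j, ∑ r, ∑ q : Fin (M+1), ∑ i ∈ Finset.range (q:ℕ), e j r q i * d^[i] (w α r)
  have hG : ∀ i, ∑ α, v α i * G α = 0 := by
    intro i
    simp only [G, Finset.mul_sum]
    rw [Finset.sum_comm]
    refine Finset.sum_eq_zero fun j _ => ?_
    rw [Finset.sum_comm]
    refine Finset.sum_eq_zero fun r _ => ?_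
    rw [Finset.sum_comm]
    refine Finset.sum_eq_zero fun q _ => ?_
    rw [Finset.sum_comm]
    refine Finset.sum_eq_zero fun k hk => ?_
    have h := D.orth' hd k 0 (by have := Finset.mem_range.1 hk; have := q.2; omega) i r
    calc _ = e j r q k * ∑ α, d^[0] (v α i) * d^[k] (w α r) := by
          rw [Finset.mul_sum]
          refine Finset.sum_congr rfl fun α _ => ?_
          simp only [Function.iterate_zero, id]
          ring
      _ = 0 := by rw [h, mul_zero]
  have hdG : ∀ α, d (g α - G α) = ∑ r, w α r * Padj d p f r := by
    intro α
    rw [hd.sub, hg]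
    simp only [G, hd.sum, Pop, Padj, Finset.sum_mul, Finset.mul_sum]
    rw [Finset.sum_comm (f := fun r j => ∑ q : Fin (M+1), w α r * ((-1) ^ (q:ℕ) * d^[(q:ℕ)] (p j r q * f j)))]
    rw [← Finset.sum_sub_distrib]
    refine Finset.sum_congr rfl fun j _ => ?_
    rw [← Finset.sum_sub_distrib]
    refine Finset.sum_congr rfl fun r _ => ?_
    rw [← Finset.sum_sub_distrib]
    refine Finset.sum_congr rfl fun q _ => ?_
    have := he j r q (w α r)
    rw [hd.sum] at this
    linear_combination this
  have := D.solve hd (Padj d p f) (fun α => g α - G α) hdG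
  rw [← this]
  congr 1
  ext i
  simp only [mul_sub, Finset.sum_sub_distrib, hG, sub_zero]

theorem matOp_sub (hd : IsDerivation d) (N : ℕ) (x y : Fin l → F) :
    matOp d N K (fun j => x j - y j) = matOp d N K x - matOp d N K y := by
  ext i
  have h : ∀ n a b, d^[n] (a - b) = d^[n] a - d^[n] b := by
    intro n a b
    have := hd.iter_add n (a - b) b
    rw [sub_add_cancel] at this
    rw [this]; ring
  simp only [matOp, h, mul_sub, Finset.sum_sub_distrib, Pi.sub_apply]

theorem Dual.core (hd : IsDerivation d) (D : Dual d M l K L v w T)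
    (p : Fin l → Fin l → Fin (M+1) → F) (c : Fin (M+1) × Fin l → Fin (M+1) × Fin l → F)
    (hc : ∀ α β, d (c α β) = 0) (hp : ∀ α j, Pop d p (w α) j = ∑ β, c α β * v β j)
    (u : Fin l → F) (h : Fin (M+1) × Fin l → F)
    (hh : ∀ α, d (h α) = - ∑ j, matOpAdj d (M+1) K u j * v α j) (hu : ∀ r, u r = ∑ α, w α r * h α) :
    matOp d (M+1) K (Pop d p u) - Padj d p (matOpAdj d (M+1) K u) =
      matOp d (M+1) K (fun j => ∑ β, v β j * ∑ α, (c α β + c β α) * h α) := by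
  set f := matOpAdj d (M+1) K u with hf
  have h1 : ∀ r, ∀ n ≤ M, d^[n] (u r) = ∑ α, d^[n] (w α r) * h α := by
    intro r n hn
    rw [hu]
    refine jets hd (fun α => w α r) h M ?_ n hn
    intro n hn
    simp only [hh, mul_neg, Finset.sum_neg_distrib, Finset.mul_sum]
    rw [Finset.sum_comm, neg_eq_zero]
    refine Finset.sum_eq_zero fun j _ => ?_
    have := D.orth' hd n 0 (by omega) j r
    calc _ = f j * ∑ α, d^[0] (v α j) * d^[n] (w α r) := by
          rw [Finset.mul_sum]
          refine Finset.sum_congr rfl fun α _ => ?_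
          simp only [Function.iterate_zero, id]
          ring
      _ = 0 := by rw [this, mul_zero]
  have h2 : ∀ j, Pop d p u j = ∑ β, v β j * ∑ α, c α β * h α := by
    intro j
    have : Pop d p u j = ∑ α, Pop d p (w α) j * h α := by
      simp only [Pop, Finset.sum_mul]
      rw [Finset.sum_comm (s := Finset.univ (α := Fin (M+1) × Fin l))]
      refine Finset.sum_congr rfl fun r _ => ?_
      rw [Finset.sum_comm (s := Finset.univ (α := Fin (M+1) × Fin l))]
      refine Finset.sum_congr rfl fun q _ => ?_
      rw [h1 r q (by have := q.2; omega), Finset.mul_sum]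
      simp only [mul_assoc]
    rw [this]
    simp only [hp, Finset.sum_mul, Finset.mul_sum]
    rw [Finset.sum_comm]
    refine Finset.sum_congr rfl fun β _ => Finset.sum_congr rfl fun α _ => ?_
    ring
  have h3 := D.solve' hd p f (fun β => - ∑ α, c β α * h α) (by
    intro β
    rw [hd.neg, hd.sum]
    simp only [hd.const_mul (hc _ _), hh, hp, Finset.sum_mul, Finset.mul_sum, mul_neg,
      Finset.sum_neg_distrib, neg_neg]
    rw [Finset.sum_comm]
    refine Finset.sum_congr rfl fun j _ => Finset.sum_congr rfl fun α _ => ?_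
    ring)
  rw [← h3, show Pop d p u = _ from funext h2, ← matOp_sub hd]
  congr 1
  ext j
  rw [← Finset.sum_sub_distrib]
  refine Finset.sum_congr rfl fun β _ => ?_
  simp only [add_mul, Finset.sum_add_distrib]
  ring

theorem Dual.v_indep (hd : IsDerivation d) (D : Dual d M l K L v w T)
    (s : Fin (M+1) × Fin l → F) (hs : ∀ α, d (s α) = 0) (h : ∀ j, ∑ α, s α * v α j = 0) :
    ∀ α, s α = 0 := by
  intro γ
  have h1 : ∀ n j, ∑ α, s α * d^[n] (v α j) = 0 := by
    intro n j
    have := congrArg (d^[n]) (h j)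
    rw [hd.iter_sum, hd.iter_zero] at this
    simpa only [hd.iter_const_mul (hs _)] using this
  have h2 : ∑ x : Fin (M+1) × Fin l, T γ (x.1+1) x.2 * ∑ α, s α * d^[(x.1:ℕ)] (v α x.2) = 0 := by
    simp [h1]
  have h3 : ∑ x : Fin (M+1) × Fin l, T γ (x.1+1) x.2 * ∑ α, s α * d^[(x.1:ℕ)] (v α x.2)
      = ∑ α, s α * ∑ x : Fin (M+1) × Fin l, T γ (x.1+1) x.2 * d^[(x.1:ℕ)] (v α x.2) := by
    simp only [Finset.mul_sum]
    rw [Finset.sum_comm]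
    refine Finset.sum_congr rfl fun β _ => Finset.sum_congr rfl fun α _ => ?_
    ring
  rw [h3] at h2
  simpa [D.zy] using h2

/-- error terms -/
def Eop (d : F → F) (τ : ℕ → F) : ℕ → F → F
  | 0, _ => 0
  | n+1, u => d (Eop d τ n u) + τ n * u

theorem Eop_zero (hd : IsDerivation d) (τ : ℕ → F) (n : ℕ) (h : ∀ m < n, τ m = 0) (m : ℕ) (hm : m ≤ n) :
    Eop d τ m = fun _ => 0 := by
  induction m with
  | zero => rfl
  | succ m ih =>
    ext u
    simp [Eop, ih (by omega), h m (by omega), hd.zero]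

theorem Eop_lead (hd : IsDerivation d) (τ : ℕ → F) (n : ℕ) (h : ∀ m < n, τ m = 0) (k : ℕ) :
    OpLead d k (τ n) (Eop d τ (n+1+k)) := by
  induction k with
  | zero =>
    have : Eop d τ (n+1+0) = fun u => τ n * u := by
      ext u
      simp [Eop, Eop_zero hd τ n h n le_rfl, hd.zero]
    rw [this]
    exact OpLead.base _
  | succ k ih =>
    have h1 := (ih.deriv hd).add (OpLead.up' (m := k+1) (by omega) (OpLead.base (d := d) (τ (n+1+k))))
    rw [add_zero] at h1
    exact h1

theorem Dual.final (hd : IsDerivation d) (hlc : LinearlyClosed d) (D : Dual d M l K L v w T)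
    (s : Fin (M+1) × Fin l → Fin (M+1) × Fin l → F) (hs : ∀ α β, d (s α β) = 0)
    (H : ∀ f : Fin l → F, ∃ h : Fin (M+1) × Fin l → F, (∀ α, d (h α) = - ∑ j, f j * v α j) ∧
      matOp d (M+1) K (fun j => ∑ β, v β j * ∑ α, s α β * h α) = 0) :
    ∀ α β, s α β = 0 := by
  let t : Fin (M+1) × Fin l → Fin l → F := fun β r => ∑ α, s α β * v α r
  suffices ht : ∀ β r, t β r = 0 from
    fun α β => D.v_indep hd (fun α => s α β) (fun α => hs α β) (ht β) α
  intro β r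
  let τ : Fin l → ℕ → F := fun i n => ∑ β, d^[n] (v β i) * t β r
  have hE : ∀ u i, ∑ j, ∑ n ∈ Finset.range (M+1+1), K i j n * Eop d (τ j) n u = 0 := by
    intro u i
    obtain ⟨h, hh, hK⟩ := H (Pi.single r u)
    let q : Fin (M+1) × Fin l → F := fun β => ∑ α, s α β * h α
    have hq : ∀ β, d (q β) = - (t β r * u) := by
      intro β
      simp only [q, hd.sum, hd.const_mul (hs _ _), hh, t, Finset.sum_mul]
      rw [← Finset.sum_neg_distrib]
      refine Finset.sum_congr rfl fun α _ => ?_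
      rw [Finset.sum_eq_single r]
      · simp; ring
      · intro b _ hb; simp [hb]
      · simp
    have hj : ∀ j n, d^[n] (∑ β, v β j * q β) = ∑ β, d^[n] (v β j) * q β - Eop d (τ j) n u := by
      intro j n
      induction n with
      | zero => simp [Eop]
      | succ n ih =>
        rw [IsDerivation.iter_succ, ih, hd.sub, hd.sum]
        simp only [hd.leibniz, Finset.sum_add_distrib, hq, Eop, IsDerivation.iter_succ]
        have : ∑ β, d^[n] (v β j) * -(t β r * u) = - (τ j n * u) := by
          simp only [τ, Finset.sum_mul]
          rw [← Finset.sum_neg_distrib]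
          refine Finset.sum_congr rfl fun α _ => ?_
          ring
        rw [this]
        ring
    have h1 := congrFun hK i
    simp only [matOp, Pi.zero_apply] at h1
    change ∑ j, ∑ n ∈ Finset.range (M+1+1), K i j n * d^[n] (∑ β, v β j * q β) = 0 at h1
    simp only [hj, mul_sub, Finset.sum_sub_distrib] at h1
    have h2 : ∑ j, ∑ n ∈ Finset.range (M+1+1), K i j n * ∑ β, d^[n] (v β j) * q β = 0 := by
      have h3 : ∑ β, matOp d (M+1) K (v β) i * q β = 0 := by simp [D.Kv]
      rw [← h3]
      simp only [matOp, Finset.sum_mul, Finset.mul_sum]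
      rw [Finset.sum_comm (s := Finset.univ (α := Fin (M+1) × Fin l))]
      refine Finset.sum_congr rfl fun j _ => ?_
      rw [Finset.sum_comm (s := Finset.univ (α := Fin (M+1) × Fin l))]
      refine Finset.sum_congr rfl fun n _ => Finset.sum_congr rfl fun β _ => ?_
      ring
    rw [h2] at h1
    linear_combination -h1
  have hτ : ∀ n ≤ M, ∀ j, τ j n = 0 := by
    intro n
    induction n using Nat.strong_induction_on with
    | _ n ih =>
    intro hn
    have hz : ∀ j, ∀ m < n, τ j m = 0 := fun j m hm => ih m hm (by omega) j
    have hi : ∀ i, ∑ j, K i j (M+1) * τ j n = 0 := by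
      intro i
      have hop : OpLead d (M - n) (∑ j, ∑ m ∈ Finset.range (M+1+1), (if m = M+1 then K i j (M+1) * τ j n else 0))
          (fun u => ∑ j, ∑ m ∈ Finset.range (M+1+1), K i j m * Eop d (τ j) m u) := by
        refine OpLead.sum _ fun j _ => OpLead.sum _ fun m hm => ?_
        have hm' := Finset.mem_range.1 hm
        split_ifs with h1
        · subst h1
          have := (Eop_lead hd (τ j) n (hz j) (M - n)).mul (K i j (M+1))
          rwa [show n + 1 + (M - n) = M + 1 by omega] at this
        · by_cases h2 : m ≤ n
          · rw [Eop_zero hd (τ j) n (hz j) m h2]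
            simpa using OpLead.zero (d := d) (M-n)
          · have := (Eop_lead hd (τ j) n (hz j) (m - n - 1)).mul (K i j m)
            rw [show n + 1 + (m - n - 1) = m by omega] at this
            exact this.up' (by omega)
      have := hop.eq_zero hlc (fun u => hE u i)
      simpa using this
    have h1 : Matrix.mulVec (Matrix.of fun i j => K i j (M+1)) (fun j => τ j n) = 0 := by
      ext i; simpa [Matrix.mulVec, dotProduct] using hi i
    have hLK := mul_eq_one_comm.1 D.KL
    have h2 := congrArg (Matrix.mulVec L) h1
    rw [Matrix.mulVec_mulVec, hLK, Matrix.one_mulVec, Matrix.mulVec_zero] at h2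
    exact fun j => congrFun h2 j
  have h2 : ∑ x : Fin (M+1) × Fin l, T β (x.1+1) x.2 * τ x.2 x.1 = 0 :=
    Finset.sum_eq_zero fun x _ => by rw [hτ x.1 (by have := x.1.2; omega), mul_zero]
  have h3 : ∑ x : Fin (M+1) × Fin l, T β (x.1+1) x.2 * τ x.2 x.1
      = ∑ α, t α r * ∑ x : Fin (M+1) × Fin l, T β (x.1+1) x.2 * d^[(x.1:ℕ)] (v α x.2) := by
    simp only [τ, Finset.mul_sum]
    rw [Finset.sum_comm]
    refine Finset.sum_congr rfl fun β _ => Finset.sum_congr rfl fun α _ => ?_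
    ring
  rw [h3] at h2
  simpa [D.zy] using h2

/-- skew matrices -/
def skewM (C : Type*) [Field C] (ι : Type*) : Submodule C (ι → ι → C) where
  carrier := {c | ∀ a b, c a b = - c b a}
  add_mem' := by
    intro x y hx hy a b
    simp only [Pi.add_apply]
    rw [hx a b, hy a b]; ring
  zero_mem' := by intro a b; simp
  smul_mem' := by
    intro k x hx a b
    simp only [Pi.smul_apply, smul_eq_mul]
    rw [hx a b]; ring

theorem card_lt (m : ℕ) : Fintype.card {x : Fin m × Fin m // x.1 < x.2} = m.choose 2 := by
  have e : {x : Fin m × Fin m // x.1 < x.2} ≃ (Σ b : Fin m, Fin (b:ℕ)) :=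
    { toFun := fun x => ⟨x.1.2, ⟨x.1.1, x.2⟩⟩
      invFun := fun y => ⟨(⟨y.2, y.2.2.trans y.1.2⟩, y.1), y.2.2⟩
      left_inv := fun x => rfl
      right_inv := fun y => rfl }
  rw [Fintype.card_congr e, Fintype.card_sigma]
  simp only [Fintype.card_fin]
  rw [Fin.sum_univ_eq_sum_range (fun i => i), Finset.sum_range_id, Nat.choose_two_right]

theorem rank_skewM (C : Type*) [Field C] [CharZero C] (m : ℕ) (ι : Type) [Fintype ι] (e : ι ≃ Fin m) :
    Module.rank C (skewM C ι) = (m.choose 2 : Cardinal) := by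
  let J := {x : Fin m × Fin m // x.1 < x.2}
  let φ : skewM C ι ≃ₗ[C] (J → C) :=
    { toFun := fun c x => c.1 (e.symm x.1.1) (e.symm x.1.2)
      map_add' := fun _ _ => rfl
      map_smul' := fun _ _ => rfl
      invFun := fun g => ⟨fun a b => if h : e a < e b then g ⟨(e a, e b), h⟩ else
        if h : e b < e a then - g ⟨(e b, e a), h⟩ else 0, by
          intro a b
          rcases lt_trichotomy (e a) (e b) with h | h | h
          · simp [h, h.not_gt]
          · simp [h]
          · simp [h, h.not_gt]⟩
      left_inv := by
        intro c
        ext a b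
        have hc := c.2 a b
        simp only [Equiv.symm_apply_apply]
        rcases lt_trichotomy (e a) (e b) with h | h | h
        · simp [h]
        · have : a = b := e.injective h
          subst this
          simp only [lt_irrefl, dite_false]
          exact (self_eq_neg.1 hc).symm
        · simp only [h, h.not_gt, dite_true, dite_false]
          exact hc.symm
      right_inv := by
        intro g
        ext x
        simp [x.2] }
  rw [φ.rank_eq, ← Module.finrank_eq_rank, Module.finrank_fintype_fun_eq_card, card_lt]

end fin

section final_assembly

theorem Pop_eq {F : Type*} [Field F] (d : F → F) {M l : ℕ} (p : Fin l → Fin l → Fin (M+1) → F)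
    (u : Fin l → F) (j : Fin l) :
    Pop d p u j = ∑ x : Fin (M+1) × Fin l, d^[(x.1 : ℕ)] (u x.2) * p j x.2 x.1 := by
  unfold Pop
  rw [Fintype.sum_prod_type_right]
  exact Finset.sum_congr rfl fun r _ => Finset.sum_congr rfl fun q _ => mul_comm _ _

theorem matOp_zero' {F : Type*} [Field F] {d : F → F} (hd : IsDerivation d) {l : ℕ} (N : ℕ)
    (K : Fin l → Fin l → ℕ → F) : matOp d N K (fun _ => 0) = 0 := by
  funext i
  simp [matOp, hd.iter_zero]

theorem Padj_zero' {F : Type*} [Field F] {d : F → F} (hd : IsDerivation d) {M l : ℕ}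
    (p : Fin l → Fin l → Fin (M+1) → F) : Padj d p 0 = 0 := by
  funext i
  simp [Padj, hd.iter_zero]

theorem main_succ {F : Type*} [Field F] [CharZero F] (d : F → F) (hd : IsDerivation d)
    (hlc : LinearlyClosed d)
    (C : Subfield F) (hC : ∀ x : F, x ∈ C ↔ d x = 0)
    (l M : ℕ) (K : Fin l → Fin l → ℕ → F)
    (hK : IsUnit (Matrix.of fun i j : Fin l => K i j (M+1)))
    (S : Submodule C (Fin l → Fin l → Fin (M+1) → F))
    (hS : ∀ p : Fin l → Fin l → Fin (M+1) → F, p ∈ S ↔ ∀ u : Fin l → F,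
      matOp d (M+1) K (Pop d p u) = Padj d p (matOpAdj d (M+1) K u)) :
    Module.rank C S = (((M+1) * l).choose 2 : Cardinal) := by
  classical
  obtain ⟨L, v, w, T, D⟩ := exists_dual hd hlc M l K hK
  obtain ⟨U, hU⟩ := D.wr_unit hd
  set X : Matrix (Fin (M+1) × Fin l) (Fin (M+1) × Fin l) F := ↑(U⁻¹) with hX
  have hWX : ∀ α β, ∑ x : Fin (M+1) × Fin l, d^[(x.1 : ℕ)] (w α x.2) * X x β
      = if α = β then 1 else 0 := by
    intro α β
    have h := congrFun (congrFun (U.mul_inv) α) β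
    rw [hU, Matrix.mul_apply, Matrix.one_apply] at h
    exact h
  have hXW : ∀ x y : Fin (M+1) × Fin l, ∑ α, X x α * d^[(y.1 : ℕ)] (w α y.2)
      = if x = y then 1 else 0 := by
    intro α β
    have h := congrFun (congrFun (U.inv_mul) α) β
    rw [hU, Matrix.mul_apply, Matrix.one_apply] at h
    exact h
  let Φ : skewM C (Fin (M+1) × Fin l) →ₗ[C] (Fin l → Fin l → Fin (M+1) → F) :=
    { toFun := fun c j r q => ∑ α, X (q, r) α * ∑ β, ((c.1 α β : C) : F) * v β j
      map_add' := by
        intro a b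
        funext j r q
        simp [add_mul, mul_add, Finset.sum_add_distrib]
      map_smul' := by
        intro k a
        funext j r q
        simp only [RingHom.id_apply, Pi.smul_apply, Finset.smul_sum, Submodule.coe_smul,
          smul_eq_mul, Subfield.coe_mul, Finset.mul_sum, Subfield.smul_def]
        refine Finset.sum_congr rfl fun α _ => Finset.sum_congr rfl fun β _ => ?_
        ring }
  have hcon : ∀ c : C, d (c : F) = 0 := fun c => (hC _).1 c.2
  have hPw : ∀ c α j, Pop d (Φ c) (w α) j = ∑ β, ((c.1 α β : C) : F) * v β j := by
    intro c α j
    rw [Pop_eq]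
    change ∑ x : Fin (M+1) × Fin l, d^[(x.1 : ℕ)] (w α x.2) *
      (∑ γ, X x γ * ∑ β, ((c.1 γ β : C) : F) * v β j) = _
    simp_rw [Finset.mul_sum (s := Finset.univ) (f := fun γ => X _ γ * _), ← mul_assoc]
    rw [Finset.sum_comm]
    simp_rw [← Finset.sum_mul, hWX]
    simp
  have huniq : ∀ p p' : Fin l → Fin l → Fin (M+1) → F,
      (∀ α j, Pop d p (w α) j = Pop d p' (w α) j) → p = p' := by
    intro p p' h
    have key : ∀ (p : Fin l → Fin l → Fin (M+1) → F) j r q,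
        p j r q = ∑ α, X (q, r) α * Pop d p (w α) j := by
      intro p j r q
      simp_rw [Pop_eq, Finset.mul_sum, ← mul_assoc]
      rw [Finset.sum_comm]
      simp_rw [← Finset.sum_mul, hXW]
      simp
    funext j r q
    rw [key p, key p']
    simp_rw [h]
  have hinj : Function.Injective Φ := by
    rw [injective_iff_map_eq_zero]
    intro c hc
    have h0 : ∀ α j, ∑ β, ((c.1 α β : C) : F) * v β j = 0 := by
      intro α j
      rw [← hPw c α j, hc, Pop_eq]
      simp
    ext α β
    exact D.v_indep hd (fun β => ((c.1 α β : C) : F)) (fun β => hcon _) (h0 α) β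
  have hrange : LinearMap.range Φ = S := by
    ext p
    rw [hS]
    constructor
    · rintro ⟨c, rfl⟩ u
      obtain ⟨h, hh, hu⟩ := D.coords hd u
      have := D.core hd (Φ c) (fun α β => ((c.1 α β : C) : F)) (fun α β => hcon _) (hPw c) u h hh hu
      rw [← sub_eq_zero, this]
      have hz : ∀ α β, ((c.1 α β : C) : F) + ((c.1 β α : C) : F) = 0 := by
        intro α β
        have h1 : c.1 α β = - c.1 β α := c.2 α β
        rw [h1]
        simp
      simp_rw [hz]
      simp only [zero_mul, Finset.sum_const_zero, mul_zero]
      exact matOp_zero' hd _ _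
    · intro hp
      have h1 : ∀ α, matOp d (M+1) K (Pop d p (w α)) = 0 := by
        intro α
        rw [hp, D.Kw hd α, Padj_zero' hd]
      have h2 := fun α => D.ker hd _ (h1 α)
      choose c hc hcp using h2
      have h3 : ∀ α β, c α β + c β α = 0 := by
        refine D.final hd hlc (fun α β => c α β + c β α) ?_ ?_
        · intro α β
          rw [hd.map_add, hc, hc, add_zero]
        · intro f
          obtain ⟨u, rfl⟩ := D.surj hd hlc f
          obtain ⟨h, hh, hu⟩ := D.coords hd u
          refine ⟨h, hh, ?_⟩
          rw [← D.core hd p c hc hcp u h hh hu, hp, sub_self]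
      refine ⟨⟨fun α β => ⟨c α β, (hC _).2 (hc α β)⟩, ?_⟩, ?_⟩
      · intro α β
        apply Subtype.ext
        exact eq_neg_of_add_eq_zero_left (h3 α β)
      · apply huniq
        intro α j
        rw [hPw, hcp]
  rw [← hrange, ← (LinearEquiv.ofInjective Φ hinj).rank_eq]
  have : Module.rank C (skewM C (Fin (M+1) × Fin l)) = (((M+1) * l).choose 2 : Cardinal) :=
    rank_skewM C ((M+1)*l) (Fin (M+1) × Fin l) finProdFinEquiv
  exact this

end final_assembly

/-- Let `F` be a linearly closed differential field of characteristic zero with constants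
`C`, and let `K` be an `ℓ×ℓ` matrix differential operator of order `N` with invertible
leading coefficient.  The coefficient families `(P_{ij,n})`, `0 ≤ n ≤ N−1`, for which the
matrix differential operator `P(u)_i = Σ_{j,n} P_{ij,n} d^n u_j` of order at most `N−1`
makes `K∘P` selfadjoint (i.e. `K(P(u)) = P*(K*(u))` for all `u ∈ F^ℓ`) form a
`C`-subspace of `F^{ℓ²N}` of dimension `Nℓ choose 2`. -/
theorem stmt_9 (F : Type*) [Field F] [CharZero F] (d : F → F) (hd : IsDerivation d)
    (hlc : LinearlyClosed d)
    (C : Subfield F) (hC : ∀ x : F, x ∈ C ↔ d x = 0)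
    (l N : ℕ) (K : Fin l → Fin l → ℕ → F)
    (hK : IsUnit (Matrix.of fun i j : Fin l => K i j N))
    (S : Submodule C (Fin l → Fin l → Fin N → F))
    (hS : ∀ p : Fin l → Fin l → Fin N → F, p ∈ S ↔ ∀ u : Fin l → F,
      matOp d N K (fun j => ∑ r, ∑ q : Fin N, p j r q * d^[(q : ℕ)] (u r))
        = fun i => ∑ j, ∑ q : Fin N,
            (-1 : F) ^ (q : ℕ) * d^[(q : ℕ)] (p j i q * matOpAdj d N K u j)) :
    Module.rank C S = ((N * l).choose 2 : Cardinal) := by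
  cases N with
  | zero => simp [rank_subsingleton']
  | succ M => exact main_succ d hd hlc C hC l M K hK S hS
end
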